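/- arXiv:2505.07037 — 3 statements merged into one kernel-verified Lean document; each statement's English description precedes it below -/
import Mathlib

section
/- If ψ in the Schwartz space on ℝⁿ is even, i.e. ψ(−x) = ψ(x) for all x, then the ħ-Fourier transform of its Wigner function satisfies F_ħ(Wψ)(z) = 2^{−n} Wψ(−(1/2)Jz) for all z ∈ ℝ²ⁿ. -/
open MeasureTheory
open scoped RealInnerProductSpace

/-- The Wigner function `Wψ(x,p) = (2πħ)^{−n} ∫ e^{−(i/ħ)p·y} ψ(x+y/2) conj(ψ(x−y/2)) dy`. -/
noncomputable def wignerFn (n : ℕ) (hb : ℝ) (ψ : SchwartzMap (EuclideanSpace ℝ (Fin n)) ℂ)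
    (z : EuclideanSpace ℝ (Fin n) × EuclideanSpace ℝ (Fin n)) : ℂ :=
  ((2 * Real.pi * hb) ^ (-(n : ℝ)) : ℝ) *
    ∫ y : EuclideanSpace ℝ (Fin n),
      Complex.exp (-(Complex.I / hb) * (⟪z.2, y⟫ : ℝ)) *
        ψ (z.1 + (1 / 2 : ℝ) • y) * (starRingEnd ℂ) (ψ (z.1 - (1 / 2 : ℝ) • y))

/-- The `ħ`-Fourier transform on phase space `ℝ²ⁿ = ℝⁿ × ℝⁿ`:
`F_ħΦ(ζ) = (2πħ)^{−n} ∫ e^{−i ζ·z/ħ} Φ(z) dz`. -/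
noncomputable def hbarFourierPhase (n : ℕ) (hb : ℝ)
    (Φ : EuclideanSpace ℝ (Fin n) × EuclideanSpace ℝ (Fin n) → ℂ)
    (ζ : EuclideanSpace ℝ (Fin n) × EuclideanSpace ℝ (Fin n)) : ℂ :=
  ((2 * Real.pi * hb) ^ (-(n : ℝ)) : ℝ) *
    ∫ z : EuclideanSpace ℝ (Fin n) × EuclideanSpace ℝ (Fin n),
      Complex.exp (-Complex.I * ((⟪ζ.1, z.1⟫ : ℝ) + (⟪ζ.2, z.2⟫ : ℝ)) / hb) * Φ z

/-- The standard symplectic matrix `J(x,p) = (p, −x)` on `ℝ²ⁿ`. -/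
def symplecticJ (n : ℕ) (z : EuclideanSpace ℝ (Fin n) × EuclideanSpace ℝ (Fin n)) :
    EuclideanSpace ℝ (Fin n) × EuclideanSpace ℝ (Fin n) :=
  (z.2, -z.1)

/-!
After `y ↦ 2πħ y` the cross-Wigner function of `f` and `g` is
`W(f, g)(x, p) = 𝓕 (y ↦ f (x + πħ y) conj (g (x - πħ y))) p`, a Fourier transform in the second
variable alone of a Schwartz kernel on `E × E`. Every continuous seminorm of the slices of the
kernel decays rapidly in `x`, so this partial transform is integrable; Fubini and Fourier inversion
in `p` then turn the phase-space transform of `W(f, g)` into a cross-ambiguity function at `-Jz`.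
Writing its integration variable as `y / 2` makes that ambiguity function a rescaled Wigner function
of `f` and the reflection of `g`, and evenness removes the reflection.
-/

open Module
open scoped ComplexConjugate FourierTransform Real SchwartzMap

lemma norm_prod_pow_le {E F : Type*} [SeminormedAddCommGroup E] [SeminormedAddCommGroup F]
    (z : E × F) (k : ℕ) : ‖z‖ ^ k ≤ (1 + ‖z.1‖) ^ k * (1 + ‖z.2‖) ^ k := by
  rw [← mul_pow, Prod.norm_def]
  have h₁ := norm_nonneg z.1
  have h₂ := norm_nonneg z.2
  gcongr
  exact max_le (by nlinarith) (by nlinarith)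

section Schwartz

variable {E F G : Type*} [NormedAddCommGroup E] [NormedSpace ℝ E]
  [NormedAddCommGroup F] [NormedSpace ℝ F] [NormedAddCommGroup G] [NormedSpace ℝ G]

lemma norm_iteratedFDeriv_comp_continuousLinearMap_le {L : E →L[ℝ] F} (hL : ‖L‖ ≤ 1) {f : F → G}
    {n : ℕ} (hf : ContDiff ℝ n f) (x : E) :
    ‖iteratedFDeriv ℝ n (f ∘ L) x‖ ≤ ‖iteratedFDeriv ℝ n f (L x)‖ := by
  rw [L.iteratedFDeriv_comp_right hf x le_rfl]
  refine (ContinuousMultilinearMap.norm_compContinuousLinearMap_le _ _).trans ?_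
  rw [Finset.prod_const, Finset.card_fin]
  exact mul_le_of_le_one_right (norm_nonneg _) (pow_le_one₀ (norm_nonneg _) hL)

lemma norm_iteratedFDeriv_comp_prodMk_le {f : E × F → G} {n : ℕ} (hf : ContDiff ℝ n f)
    (x : E) (y : F) :
    ‖iteratedFDeriv ℝ n (fun y ↦ f (x, y)) y‖ ≤ ‖iteratedFDeriv ℝ n f (x, y)‖ := by
  have hshift : ContDiff ℝ n fun z ↦ f ((x, 0) + z) := hf.comp (contDiff_const.add contDiff_id)
  have h := norm_iteratedFDeriv_comp_continuousLinearMap_le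
    (ContinuousLinearMap.norm_inr_le_one ℝ E F) hshift y
  simpa [Function.comp_def, iteratedFDeriv_comp_add_left] using h

lemma pow_mul_norm_iteratedFDeriv_comp_prodMk_le (K : 𝓢(E × F, G)) (j k n : ℕ) (x : E) (y : F) :
    ‖x‖ ^ j * (‖y‖ ^ k * ‖iteratedFDeriv ℝ n (fun y ↦ K (x, y)) y‖) ≤
      SchwartzMap.seminorm ℝ (j + k) n K := by
  calc ‖x‖ ^ j * (‖y‖ ^ k * ‖iteratedFDeriv ℝ n (fun y ↦ K (x, y)) y‖)
      ≤ ‖(x, y)‖ ^ j * (‖(x, y)‖ ^ k * ‖iteratedFDeriv ℝ n K (x, y)‖) := by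
        gcongr
        · exact norm_fst_le (x, y)
        · exact norm_snd_le (x, y)
        · exact norm_iteratedFDeriv_comp_prodMk_le (K.smooth n) x y
    _ = ‖(x, y)‖ ^ (j + k) * ‖iteratedFDeriv ℝ n K (x, y)‖ := by rw [pow_add, mul_assoc]
    _ ≤ SchwartzMap.seminorm ℝ (j + k) n K := K.le_seminorm ℝ (j + k) n (x, y)

/-- The slice `y ↦ K (x, y)` of a Schwartz function on a product, as a Schwartz function, so that
one variable can be Fourier transformed while the other is a parameter. -/
noncomputable def schwartzSlice (K : 𝓢(E × F, G)) (x : E) : 𝓢(F, G) where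
  toFun y := K (x, y)
  smooth' := (K.smooth ⊤).comp (contDiff_const.prodMk contDiff_id)
  decay' k n := ⟨SchwartzMap.seminorm ℝ (0 + k) n K, fun y ↦ by
    simpa using pow_mul_norm_iteratedFDeriv_comp_prodMk_le K 0 k n x y⟩

@[simp]
lemma schwartzSlice_apply (K : 𝓢(E × F, G)) (x : E) (y : F) : schwartzSlice K x y = K (x, y) :=
  rfl

lemma pow_mul_seminorm_schwartzSlice_le (K : 𝓢(E × F, G)) (j k n : ℕ) (x : E) :
    ‖x‖ ^ j * SchwartzMap.seminorm ℝ k n (schwartzSlice K x) ≤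
      SchwartzMap.seminorm ℝ (j + k) n K := by
  have h : SchwartzMap.seminorm ℝ k n (‖x‖ ^ j • schwartzSlice K x) ≤
      SchwartzMap.seminorm ℝ (j + k) n K := by
    refine SchwartzMap.seminorm_le_bound ℝ k n _ (apply_nonneg _ _) fun y ↦ ?_
    have hsmul := iteratedFDeriv_const_smul_apply (a := ‖x‖ ^ j)
      ((schwartzSlice K x).smooth n).contDiffAt (x := y)
    rw [FunLike.coe_smul, hsmul, norm_smul, norm_pow, norm_norm, mul_left_comm]
    exact pow_mul_norm_iteratedFDeriv_comp_prodMk_le K j k n x y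
  simpa [map_smul_eq_mul] using h

lemma exists_pow_mul_seminorm_schwartzSlice_le {q : Seminorm ℝ 𝓢(F, G)} (hq : Continuous q)
    (K : 𝓢(E × F, G)) (j : ℕ) : ∃ C, ∀ x, ‖x‖ ^ j * q (schwartzSlice K x) ≤ C := by
  obtain ⟨s, C, -, hqC⟩ := Seminorm.bound_of_continuous (schwartz_withSeminorms ℝ F G) q hq
  refine ⟨C * ∑ i ∈ s, SchwartzMap.seminorm ℝ (j + i.1) i.2 K, fun x ↦ ?_⟩
  have hsum : q (schwartzSlice K x) ≤
      C * ∑ i ∈ s, SchwartzMap.seminorm ℝ i.1 i.2 (schwartzSlice K x) := by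
    refine (hqC _).trans (mul_le_mul_of_nonneg_left ?_ C.2)
    simpa [schwartzSeminormFamily] using
      Seminorm.finset_sup_le_sum (schwartzSeminormFamily ℝ F G) s (schwartzSlice K x)
  calc ‖x‖ ^ j * q (schwartzSlice K x)
      ≤ ‖x‖ ^ j * (C * ∑ i ∈ s, SchwartzMap.seminorm ℝ i.1 i.2 (schwartzSlice K x)) := by gcongr
    _ = C * ∑ i ∈ s, ‖x‖ ^ j * SchwartzMap.seminorm ℝ i.1 i.2 (schwartzSlice K x) := by
        rw [mul_left_comm, Finset.mul_sum]
    _ ≤ C * ∑ i ∈ s, SchwartzMap.seminorm ℝ (j + i.1) i.2 K := by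
        gcongr with i
        exact pow_mul_seminorm_schwartzSlice_le K j i.1 i.2 x

variable {A : Type*} [NormedRing A] [NormedAlgebra ℝ A]

lemma exists_pow_mul_norm_iteratedFDeriv_tensor_le (f : 𝓢(E, A)) (g : 𝓢(F, A)) (k n : ℕ) :
    ∃ C, ∀ z : E × F, ‖z‖ ^ k * ‖iteratedFDeriv ℝ n (fun z : E × F ↦ f z.1 * g z.2) z‖ ≤ C := by
  set Sf := 2 ^ k * (Finset.Iic (k, n)).sup (fun m ↦ SchwartzMap.seminorm ℝ m.1 m.2) f
  set Sg := 2 ^ k * (Finset.Iic (k, n)).sup (fun m ↦ SchwartzMap.seminorm ℝ m.1 m.2) g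
  have hf (i : ℕ) (hi : i ≤ n) (u : E) : (1 + ‖u‖) ^ k * ‖iteratedFDeriv ℝ i f u‖ ≤ Sf :=
    SchwartzMap.one_add_le_sup_seminorm_apply (m := (k, n)) le_rfl hi f u
  have hg (i : ℕ) (hi : i ≤ n) (v : F) : (1 + ‖v‖) ^ k * ‖iteratedFDeriv ℝ i g v‖ ≤ Sg :=
    SchwartzMap.one_add_le_sup_seminorm_apply (m := (k, n)) le_rfl hi g v
  refine ⟨∑ i ∈ Finset.range (n + 1), n.choose i * (Sf * Sg), fun z ↦ ?_⟩
  have hleibniz := norm_iteratedFDeriv_mul_le (n := n) ((f.smooth n).comp contDiff_fst)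
    ((g.smooth n).comp contDiff_snd) z le_rfl
  calc ‖z‖ ^ k * ‖iteratedFDeriv ℝ n (fun z : E × F ↦ f z.1 * g z.2) z‖
      ≤ (1 + ‖z.1‖) ^ k * (1 + ‖z.2‖) ^ k * ∑ i ∈ Finset.range (n + 1), n.choose i *
          ‖iteratedFDeriv ℝ i (f ∘ Prod.fst) z‖ * ‖iteratedFDeriv ℝ (n - i) (g ∘ Prod.snd) z‖ := by
        gcongr
        · exact norm_prod_pow_le z k
        · exact hleibniz
    _ ≤ (1 + ‖z.1‖) ^ k * (1 + ‖z.2‖) ^ k * ∑ i ∈ Finset.range (n + 1), n.choose i *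
          ‖iteratedFDeriv ℝ i f z.1‖ * ‖iteratedFDeriv ℝ (n - i) g z.2‖ := by
        gcongr with i
        · exact norm_iteratedFDeriv_comp_continuousLinearMap_le
            (ContinuousLinearMap.norm_fst_le ℝ E F) (f.smooth i) z
        · exact norm_iteratedFDeriv_comp_continuousLinearMap_le
            (ContinuousLinearMap.norm_snd_le ℝ E F) (g.smooth _) z
    _ = ∑ i ∈ Finset.range (n + 1), n.choose i *
          (((1 + ‖z.1‖) ^ k * ‖iteratedFDeriv ℝ i f z.1‖) *
            ((1 + ‖z.2‖) ^ k * ‖iteratedFDeriv ℝ (n - i) g z.2‖)) := by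
        rw [Finset.mul_sum]
        exact Finset.sum_congr rfl fun i _ ↦ by ring
    _ ≤ ∑ i ∈ Finset.range (n + 1), n.choose i * (Sf * Sg) := by
        gcongr with i hi
        · exact hf i (Finset.mem_range_succ_iff.mp hi) z.1
        · exact hg (n - i) (Nat.sub_le n i) z.2

/-- The tensor product `(u, v) ↦ f u * g v` of two Schwartz functions, as a Schwartz function on
the product space. The values lie in a normed algebra, whose product plays the role of `⊗`. -/
noncomputable def schwartzTensor (f : 𝓢(E, A)) (g : 𝓢(F, A)) : 𝓢(E × F, A) where
  toFun z := f z.1 * g z.2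
  smooth' := ((f.smooth ⊤).comp contDiff_fst).mul ((g.smooth ⊤).comp contDiff_snd)
  decay' := exists_pow_mul_norm_iteratedFDeriv_tensor_le f g

@[simp]
lemma schwartzTensor_apply (f : 𝓢(E, A)) (g : 𝓢(F, A)) (z : E × F) :
    schwartzTensor f g z = f z.1 * g z.2 :=
  rfl

/-- The linear change of variables `(x, y) ↦ (x + t y, x - t y)` of `E × E`, which takes a tensor
product to the kernel whose partial Fourier transform is a cross-Wigner function. -/
noncomputable def sumDiffEquiv (E : Type*) [NormedAddCommGroup E] [NormedSpace ℝ E] {t : ℝ}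
    (ht : t ≠ 0) : (E × E) ≃L[ℝ] E × E :=
  let fst := ContinuousLinearMap.fst ℝ E E
  let snd := ContinuousLinearMap.snd ℝ E E
  .equivOfInverse ((fst + t • snd).prod (fst - t • snd))
    (((1 / 2 : ℝ) • (fst + snd)).prod ((2 * t)⁻¹ • (fst - snd)))
    (fun z ↦ Prod.ext
      (show (1 / 2 : ℝ) • ((z.1 + t • z.2) + (z.1 - t • z.2)) = z.1 by module)
      (show (2 * t)⁻¹ • ((z.1 + t • z.2) - (z.1 - t • z.2)) = z.2 by
        match_scalars <;> field_simp <;> norm_num))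
    (fun z ↦ Prod.ext
      (show (1 / 2 : ℝ) • (z.1 + z.2) + t • (2 * t)⁻¹ • (z.1 - z.2) = z.1 by
        match_scalars <;> field_simp <;> norm_num)
      (show (1 / 2 : ℝ) • (z.1 + z.2) - t • (2 * t)⁻¹ • (z.1 - z.2) = z.2 by
        match_scalars <;> field_simp <;> norm_num))

end Schwartz

section PartialFourier

variable {E F G : Type*} [NormedAddCommGroup E] [NormedSpace ℝ E] [MeasurableSpace E]
  [BorelSpace E] [SecondCountableTopology E]
  [NormedAddCommGroup F] [InnerProductSpace ℝ F] [FiniteDimensional ℝ F] [MeasurableSpace F]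
  [BorelSpace F] [NormedAddCommGroup G] [NormedSpace ℂ G]

/-- The Fourier transform of a Schwartz function on `E × F` in the second variable alone, with
Mathlib's normalisation `e^{-2πi⟪y, p⟫}`. -/
noncomputable def partialFourier (K : 𝓢(E × F, G)) (z : E × F) : G :=
  𝓕 (schwartzSlice K z.1) z.2

lemma stronglyMeasurable_partialFourier (K : 𝓢(E × F, G)) :
    StronglyMeasurable (partialFourier K) := by
  unfold partialFourier
  simp only [SchwartzMap.fourier_coe, Real.fourier_eq', schwartzSlice_apply]
  refine StronglyMeasurable.integral_prod_right
    (f := fun (z : E × F) y ↦ Complex.exp (↑(-2 * π * ⟪y, z.2⟫) * Complex.I) • K (z.1, y)) ?_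
  refine Continuous.stronglyMeasurable ?_
  simp only [Function.uncurry_def]
  fun_prop

lemma integrable_partialFourier (μ : Measure E) [μ.HasTemperateGrowth] [SFinite μ]
    (K : 𝓢(E × F, G)) : Integrable (partialFourier K) (μ.prod volume) := by
  have hmeas := (stronglyMeasurable_partialFourier K).aestronglyMeasurable
    (μ := μ.prod volume)
  refine (integrable_prod_iff hmeas).2
    ⟨.of_forall fun x ↦ (𝓕 (schwartzSlice K x)).integrable, ?_⟩
  let fourierL1 : 𝓢(F, G) →L[ℝ] Lp G 1 (volume : Measure F) :=
    (SchwartzMap.toLpCLM ℝ G 1).comp (FourierTransform.fourierCLM ℝ 𝓢(F, G))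
  let q : Seminorm ℝ 𝓢(F, G) := (normSeminorm ℝ _).comp fourierL1.toLinearMap
  have hq : Continuous q := fourierL1.continuous.norm
  have hq_slice (x : E) : ∫ y, ‖partialFourier K (x, y)‖ = q (schwartzSlice K x) :=
    (SchwartzMap.norm_toLp_one (f := 𝓕 (schwartzSlice K x)) (μ := volume)).symm
  obtain ⟨C₁, hC₁⟩ := exists_pow_mul_seminorm_schwartzSlice_le hq K 0
  obtain ⟨C₂, hC₂⟩ := exists_pow_mul_seminorm_schwartzSlice_le hq K (0 + μ.integrablePower)
  have hdecay : Integrable (fun x ↦ ‖x‖ ^ 0 * ‖∫ y, ‖partialFourier K (x, y)‖‖) μ := by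
    refine integrable_of_le_of_pow_mul_le (C₁ := C₁) (C₂ := C₂) ?_ ?_
      hmeas.norm.integral_prod_right'
    · simpa [hq_slice, abs_of_nonneg (apply_nonneg q _)] using hC₁
    · simpa [hq_slice, abs_of_nonneg (apply_nonneg q _)] using hC₂
  simpa [hq_slice, abs_of_nonneg (apply_nonneg q _)] using hdecay

end PartialFourier

section PhaseSpace

variable {E : Type*} [NormedAddCommGroup E] [InnerProductSpace ℝ E] [FiniteDimensional ℝ E]
  [MeasurableSpace E] [BorelSpace E]

/-- The cross-Wigner function of `f` and `g`, at a point `z = (x, p)` of the phase space `E × E`;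
its diagonal `f = g` is the Wigner function. -/
noncomputable def crossWigner (hb : ℝ) (f g : E → ℂ) (z : E × E) : ℂ :=
  ((2 * π * hb) ^ (-(finrank ℝ E : ℝ)) : ℝ) *
    ∫ y, Complex.exp (-(Complex.I / hb) * (⟪z.2, y⟫ : ℝ)) *
      f (z.1 + (1 / 2 : ℝ) • y) * conj (g (z.1 - (1 / 2 : ℝ) • y))

/-- The cross-ambiguity function of `f` and `g`: in the cross-Wigner integral, the roles of the
position and of the integrated displacement are exchanged. -/
noncomputable def crossAmbiguity (hb : ℝ) (f g : E → ℂ) (z : E × E) : ℂ :=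
  ((2 * π * hb) ^ (-(finrank ℝ E : ℝ)) : ℝ) *
    ∫ x, Complex.exp (-(Complex.I / hb) * (⟪z.2, x⟫ : ℝ)) *
      f (x + (1 / 2 : ℝ) • z.1) * conj (g (x - (1 / 2 : ℝ) • z.1))

/-- The `ħ`-Fourier transform on the phase space `E × E`; as `dim (E × E) = 2 dim E`, the unitary
normalisation is `(2πħ)^{-dim E}`. -/
noncomputable def phaseSpaceFourier (hb : ℝ) (Φ : E × E → ℂ) (ζ : E × E) : ℂ :=
  ((2 * π * hb) ^ (-(finrank ℝ E : ℝ)) : ℝ) *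
    ∫ z : E × E, Complex.exp (-Complex.I * ((⟪ζ.1, z.1⟫ : ℝ) + (⟪ζ.2, z.2⟫ : ℝ)) / hb) * Φ z

lemma crossAmbiguity_eq_crossWigner_comp_neg (hb : ℝ) (f g : E → ℂ) (z : E × E) :
    crossAmbiguity hb f g z =
      (2 : ℂ) ^ (-(finrank ℝ E : ℤ)) * crossWigner hb f (fun x ↦ g (-x)) ((1 / 2 : ℝ) • z) := by
  have hsubst := Measure.integral_comp_smul (volume : Measure E)
    (fun x ↦ Complex.exp (-(Complex.I / hb) * (⟪z.2, x⟫ : ℝ)) *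
      f (x + (1 / 2 : ℝ) • z.1) * conj (g (x - (1 / 2 : ℝ) • z.1))) (1 / 2)
  have hjac : |((1 / 2 : ℝ) ^ finrank ℝ E)⁻¹| = 2 ^ finrank ℝ E := by simp
  rw [hjac] at hsubst
  simp only [crossWigner, crossAmbiguity, Prod.smul_fst, Prod.smul_snd, neg_sub,
    real_inner_smul_left, ← real_inner_smul_right, add_comm ((1 / 2 : ℝ) • z.1), hsubst]
  rw [zpow_neg, zpow_natCast, Complex.real_smul]
  push_cast
  field_simp

lemma crossWigner_eq_fourier {hb : ℝ} (hhb : 0 < hb) (f g : E → ℂ) (z : E × E) :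
    crossWigner hb f g z =
      𝓕 (fun y ↦ f (z.1 + (π * hb) • y) * conj (g (z.1 - (π * hb) • y))) z.2 := by
  have hpos : 0 < 2 * π * hb := by positivity
  have hsubst := Measure.integral_comp_smul_of_nonneg (volume : Measure E)
    (fun y ↦ Complex.exp (-(Complex.I / hb) * (⟪z.2, y⟫ : ℝ)) *
      f (z.1 + (1 / 2 : ℝ) • y) * conj (g (z.1 - (1 / 2 : ℝ) • y))) (2 * π * hb) (hR := hpos.le)
  rw [crossWigner, Real.rpow_neg hpos.le, Real.rpow_natCast, ← Complex.real_smul, ← hsubst,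
    Real.fourier_eq']
  congr with y
  have hb_ne : (hb : ℂ) ≠ 0 := mod_cast hhb.ne'
  have hhalf : (1 / 2 : ℝ) * (2 * π * hb) = π * hb := by ring
  rw [smul_smul, hhalf, real_inner_smul_right, real_inner_comm, smul_eq_mul, mul_assoc]
  congr 2
  push_cast
  field_simp

lemma phaseSpaceFourier_partialFourier (hb : ℝ) (K : 𝓢(E × E, ℂ)) (z : E × E) :
    phaseSpaceFourier hb (partialFourier K) z =
      ((2 * π * hb) ^ (-(finrank ℝ E : ℝ)) : ℝ) *
        ∫ x, Complex.exp (-(Complex.I / hb) * (⟪z.1, x⟫ : ℝ)) * K (x, -(2 * π * hb)⁻¹ • z.2) := by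
  have hint : Integrable (fun w : E × E ↦
      Complex.exp (-Complex.I * ((⟪z.1, w.1⟫ : ℝ) + (⟪z.2, w.2⟫ : ℝ)) / hb) *
        partialFourier K w) (volume.prod volume) := by
    refine (integrable_partialFourier volume K).bdd_mul (c := 1)
      (Continuous.aestronglyMeasurable (by fun_prop)) (.of_forall fun w ↦ ?_)
    simp [Complex.norm_exp, ← Complex.ofReal_add]
  rw [phaseSpaceFourier, Measure.volume_eq_prod, integral_prod _ hint]
  congr with x
  have hinv : 𝓕⁻ (𝓕 (schwartzSlice K x)) (-(2 * π * hb)⁻¹ • z.2) =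
      K (x, -(2 * π * hb)⁻¹ • z.2) := by
    rw [FourierTransform.fourierInv_fourier_eq, schwartzSlice_apply]
  rw [← hinv, SchwartzMap.fourierInv_coe, Real.fourierInv_eq', ← integral_const_mul]
  congr with p
  rw [partialFourier, smul_eq_mul, ← mul_assoc, ← Complex.exp_add, real_inner_smul_right,
    real_inner_comm p]
  congr 2
  push_cast
  field_simp
  ring

lemma phaseSpaceFourier_crossWigner {hb : ℝ} (hhb : 0 < hb) (f g : 𝓢(E, ℂ)) (z : E × E) :
    phaseSpaceFourier hb (crossWigner hb f g) z = crossAmbiguity hb f g (-z.2, z.1) := by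
  have ht : π * hb ≠ 0 := by positivity
  let K : 𝓢(E × E, ℂ) := SchwartzMap.compCLMOfContinuousLinearEquiv ℝ (sumDiffEquiv E ht)
    (schwartzTensor f (g.postcompCLM (Complex.conjCLE : ℂ →L[ℝ] ℂ)))
  have hK (x y : E) : K (x, y) = f (x + (π * hb) • y) * conj (g (x - (π * hb) • y)) := rfl
  have hW : crossWigner hb f g = partialFourier K := funext fun w ↦ crossWigner_eq_fourier hhb f g w
  have hhalf : π * hb * -(2 * π * hb)⁻¹ = -(1 / 2) := by field_simp
  rw [hW, phaseSpaceFourier_partialFourier, crossAmbiguity]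
  simp only [hK, smul_smul, hhalf]
  simp only [neg_smul, smul_neg, mul_assoc]

theorem fourier_wigner_of_even_general {hb : ℝ} (hhb : 0 < hb) (f g : 𝓢(E, ℂ)) (z : E × E) :
    phaseSpaceFourier hb (crossWigner hb f g) z =
      (2 : ℂ) ^ (-(finrank ℝ E : ℤ)) *
        crossWigner hb f (fun x ↦ g (-x)) (-(1 / 2 : ℝ) • (z.2, -z.1)) := by
  rw [phaseSpaceFourier_crossWigner hhb, crossAmbiguity_eq_crossWigner_comp_neg]
  simp

end PhaseSpace

/-- For an even Schwartz function `ψ`, the `ħ`-Fourier transform of its Wigner function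
satisfies `F_ħ(Wψ)(z) = 2^{−n} Wψ(−(1/2)Jz)`. -/
theorem fourier_wigner_of_even (n : ℕ) (hb : ℝ) (hhb : 0 < hb)
    (ψ : SchwartzMap (EuclideanSpace ℝ (Fin n)) ℂ) (hψeven : ∀ x, ψ (-x) = ψ x)
    (z : EuclideanSpace ℝ (Fin n) × EuclideanSpace ℝ (Fin n)) :
    hbarFourierPhase n hb (wignerFn n hb ψ) z =
      (2 : ℂ) ^ (-(n : ℤ)) * wignerFn n hb ψ ((-(1 / 2 : ℝ)) • symplecticJ n z) := by
  simpa only [phaseSpaceFourier, crossWigner, finrank_euclideanSpace_fin, hψeven] using!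
    fourier_wigner_of_even_general hhb ψ ψ z
end

section
/- Let ψ in the Schwartz space on ℝⁿ be even (ψ(−x) = ψ(x)) with Wψ ≠ 0, and let X ⊂ ℝ²ⁿ be measurable. If the Wigner function Wψ is ε-concentrated in X in the sense that ∫_X |Wψ(z)|² dz ≥ (1−ε²)‖Wψ‖²_{L²(ℝ²ⁿ)} with 0 ≤ ε ≤ 1/2, then Vol(X) ≥ (πħ)ⁿ (1−2ε). -/
open MeasureTheory
open scoped RealInnerProductSpace

/-! Write `k_x(y) = ψ(x + y/2) conj(ψ(x - y/2))`, so that `Wψ(x, ·)` is a rescaled Fourier transform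
of `k_x`. Plancherel in `p` turns `∬ |W|²` into `∬ |k_x(y)|² = ‖ψ‖₂⁴` (Moyal), and `∬ |W|⁴` into
`∬ |k_x ⋆ k_x|²`. Centring the convolution integral at `y/2`, its four factors of `ψ` regroup as
`|k_x(y/2 + s) k_x(y/2 - s)| = |k_{x+y/4}(s) k_{x-y/4}(s)|`, so Cauchy–Schwarz gives
`|k_x ⋆ k_x (y)|² ≤ G(x + y/4) G(x - y/4)` with `G(x) = ∫ |k_x|²`. Integrating over `x` and `y`
yields Lieb's inequality `∬ |W|⁴ ≤ (πħ)⁻ⁿ (∬ |W|²)²`. A function whose `L¹` norm is largely carried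
by a set while its `L²` norm is controlled forces that set to be large; this is applied to `|W|²`.
-/

open Convolution ENNReal FourierTransform SchwartzMap

section Lintegral

theorem sq_lintegral_mul_le {α : Type*} [MeasurableSpace α] {μ : Measure α} {f g : α → ℝ≥0∞}
    (hf : AEMeasurable f μ) (hg : AEMeasurable g μ) :
    (∫⁻ x, f x * g x ∂μ) ^ 2 ≤ (∫⁻ x, f x ^ 2 ∂μ) * ∫⁻ x, g x ^ 2 ∂μ := by
  have holder := ENNReal.lintegral_mul_le_Lp_mul_Lq μ Real.HolderConjugate.two_two hf hg
  have sq_sqrt (a : ℝ≥0∞) : (a ^ (1 / 2 : ℝ)) ^ 2 = a := by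
    rw [← ENNReal.rpow_mul_natCast]; norm_num
  simpa only [Pi.mul_apply, mul_pow, sq_sqrt, ENNReal.rpow_two] using pow_le_pow_left' holder 2

theorem sq_setLIntegral_le {α : Type*} [MeasurableSpace α] {μ : Measure α} {f : α → ℝ≥0∞}
    (hf : AEMeasurable f μ) (s : Set α) :
    (∫⁻ x in s, f x ∂μ) ^ 2 ≤ μ s * ∫⁻ x, f x ^ 2 ∂μ := by
  calc (∫⁻ x in s, f x ∂μ) ^ 2 ≤ μ s * ∫⁻ x in s, f x ^ 2 ∂μ := by
        simpa using sq_lintegral_mul_le (aemeasurable_const (b := 1)) hf.restrict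
    _ ≤ μ s * ∫⁻ x, f x ^ 2 ∂μ := by gcongr; exact Measure.restrict_le_self

theorem sq_le_mul_measure_of_mul_lintegral_le {α : Type*} [MeasurableSpace α] {μ : Measure α}
    {f : α → ℝ≥0∞} (hf : AEMeasurable f μ) (hf0 : ∫⁻ x, f x ∂μ ≠ 0) (hf1 : ∫⁻ x, f x ∂μ ≠ ∞)
    {s : Set α} {c K : ℝ≥0∞} (hs : c * ∫⁻ x, f x ∂μ ≤ ∫⁻ x in s, f x ∂μ)
    (hK : ∫⁻ x, f x ^ 2 ∂μ ≤ K * (∫⁻ x, f x ∂μ) ^ 2) :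
    c ^ 2 ≤ K * μ s := by
  refine (ENNReal.mul_le_mul_iff_left (pow_ne_zero 2 hf0) (pow_ne_top hf1)).mp ?_
  calc c ^ 2 * (∫⁻ x, f x ∂μ) ^ 2 = (c * ∫⁻ x, f x ∂μ) ^ 2 := (mul_pow _ _ _).symm
    _ ≤ (∫⁻ x in s, f x ∂μ) ^ 2 := by gcongr
    _ ≤ μ s * ∫⁻ x, f x ^ 2 ∂μ := sq_setLIntegral_le hf s
    _ ≤ μ s * (K * (∫⁻ x, f x ∂μ) ^ 2) := by gcongr
    _ = K * μ s * (∫⁻ x, f x ∂μ) ^ 2 := by ring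

theorem lintegral_enorm_sq_eq_ofReal_integral {α : Type*} [MeasurableSpace α] {μ : Measure α}
    {H : Type*} [NormedAddCommGroup H] {f : α → H} (hf : MemLp f 2 μ) :
    ∫⁻ x, ‖f x‖ₑ ^ 2 ∂μ = ENNReal.ofReal (∫ x, ‖f x‖ ^ 2 ∂μ) := by
  rw [ofReal_integral_eq_lintegral_ofReal (hf.integrable_norm_pow two_ne_zero)
    (.of_forall fun x ↦ by positivity)]
  simp only [ENNReal.ofReal_pow (norm_nonneg _), ofReal_norm]

variable {E : Type*} [NormedAddCommGroup E] [NormedSpace ℝ E] [FiniteDimensional ℝ E]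
  [MeasurableSpace E] [BorelSpace E] (μ : Measure E) [μ.IsAddHaarMeasure]

theorem lintegral_comp_smul (f : E → ℝ≥0∞) {r : ℝ} (hr : r ≠ 0) :
    ∫⁻ x, f (r • x) ∂μ = ENNReal.ofReal |(r ^ Module.finrank ℝ E)⁻¹| * ∫⁻ x, f x ∂μ := by
  rw [← smul_eq_mul, ← lintegral_smul_measure, ← Measure.map_addHaar_smul μ hr]
  exact ((Homeomorph.smulOfNeZero r hr).measurableEmbedding.lintegral_map f).symm

theorem lintegral_lintegral_add_smul_mul_sub_smul {f g : E → ℝ≥0∞} (hf : Measurable f)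
    (hg : Measurable g) {r : ℝ} (hr : r ≠ 0) :
    ∫⁻ x, ∫⁻ y, f (x + r • y) * g (x - r • y) ∂μ ∂μ =
      ENNReal.ofReal |((2 * r) ^ Module.finrank ℝ E)⁻¹| *
        ((∫⁻ x, f x ∂μ) * ∫⁻ x, g x ∂μ) := by
  have shift (y : E) : ∫⁻ x, f (x + r • y) * g (x - r • y) ∂μ =
      ∫⁻ x, f x * g (x - (2 * r) • y) ∂μ := by
    rw [← lintegral_add_right_eq_self (fun x ↦ f x * g (x - (2 * r) • y)) (r • y)]
    congr with x
    rw [two_mul, add_smul, add_sub_add_right_eq_sub]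
  have inner (x : E) : ∫⁻ y, f x * g (x - (2 * r) • y) ∂μ =
      ENNReal.ofReal |((2 * r) ^ Module.finrank ℝ E)⁻¹| * (f x * ∫⁻ y, g y ∂μ) := by
    rw [lintegral_const_mul _ (by fun_prop), lintegral_comp_smul μ (fun y ↦ g (x - y)) (by simpa),
      lintegral_sub_left_eq_self, mul_left_comm]
  rw [lintegral_lintegral_swap (by fun_prop), lintegral_congr shift,
    lintegral_lintegral_swap (by fun_prop), lintegral_congr inner,
    lintegral_const_mul _ (by fun_prop), lintegral_mul_const _ hf]

end Lintegral

section Fourier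

variable {E : Type*} [NormedAddCommGroup E] [InnerProductSpace ℝ E] [FiniteDimensional ℝ E]
  [MeasurableSpace E] [BorelSpace E]

theorem lintegral_enorm_sq_fourier {H : Type*} [NormedAddCommGroup H] [InnerProductSpace ℂ H]
    [CompleteSpace H] (f : 𝓢(E, H)) : ∫⁻ ξ, ‖𝓕 f ξ‖ₑ ^ 2 = ∫⁻ x, ‖f x‖ₑ ^ 2 := by
  rw [lintegral_enorm_sq_eq_ofReal_integral ((𝓕 f).memLp 2 volume),
    lintegral_enorm_sq_eq_ofReal_integral (f.memLp 2 volume), integral_norm_sq_fourier]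

theorem lintegral_enorm_pow_four_fourier (f : 𝓢(E, ℂ)) :
    ∫⁻ ξ, ‖𝓕 f ξ‖ₑ ^ 4 = ∫⁻ x, ‖(f ⋆[.mul ℂ ℂ] f) x‖ₑ ^ 2 := by
  simp only [← convolution_apply, ← lintegral_enorm_sq_fourier, fourier_convolution,
    pairing_apply_apply, ContinuousLinearMap.mul_apply', enorm_mul]
  congr with ξ
  ring

end Fourier

section WignerKernel

variable {E : Type*} [NormedAddCommGroup E] [NormedSpace ℝ E]

/-- The Schwartz function `y ↦ ψ(x + y/2) conj(ψ(x - y/2))`, whose Fourier transform is, up to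
scaling, the Wigner function of `ψ` at position `x`. -/
noncomputable def wignerKernel (ψ : 𝓢(E, ℂ)) (x : E) : 𝓢(E, ℂ) :=
  let dilate (r : ℝˣ) : 𝓢(E, ℂ) := compCLMOfContinuousLinearEquiv ℂ (.smulLeft r)
    (ψ.compSubConstCLM ℂ (-x))
  pairing (.mul ℂ ℂ) (dilate (Units.mk0 (1 / 2) (by norm_num)))
    (postcompCLM (Complex.conjCLE : ℂ →L[ℝ] ℂ) (dilate (Units.mk0 (-(1 / 2)) (by norm_num))))

theorem wignerKernel_apply (ψ : 𝓢(E, ℂ)) (x y : E) :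
    wignerKernel ψ x y =
      ψ (x + (1 / 2 : ℝ) • y) * (starRingEnd ℂ) (ψ (x - (1 / 2 : ℝ) • y)) := by
  simp [wignerKernel, Units.smul_def, add_comm, sub_eq_add_neg]

theorem enorm_wignerKernel (ψ : 𝓢(E, ℂ)) (x y : E) :
    ‖wignerKernel ψ x y‖ₑ = ‖ψ (x + (1 / 2 : ℝ) • y)‖ₑ * ‖ψ (x - (1 / 2 : ℝ) • y)‖ₑ := by
  rw [wignerKernel_apply, enorm_mul, RCLike.enorm_conj]

theorem continuous_wignerKernel (ψ : 𝓢(E, ℂ)) :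
    Continuous fun z : E × E ↦ wignerKernel ψ z.1 z.2 := by
  simp only [wignerKernel_apply]
  fun_prop

theorem enorm_wignerKernel_mul_reflect (ψ : 𝓢(E, ℂ)) (x y s : E) :
    ‖wignerKernel ψ x ((1 / 2 : ℝ) • y + s)‖ₑ * ‖wignerKernel ψ x ((1 / 2 : ℝ) • y - s)‖ₑ =
      ‖wignerKernel ψ (x + (1 / 4 : ℝ) • y) s‖ₑ * ‖wignerKernel ψ (x - (1 / 4 : ℝ) • y) s‖ₑ := by
  have pos_pos : x + (1 / 2 : ℝ) • ((1 / 2 : ℝ) • y + s) =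
      x + (1 / 4 : ℝ) • y + (1 / 2 : ℝ) • s := by
    module
  have neg_pos : x - (1 / 2 : ℝ) • ((1 / 2 : ℝ) • y + s) =
      x - (1 / 4 : ℝ) • y - (1 / 2 : ℝ) • s := by
    module
  have pos_neg : x + (1 / 2 : ℝ) • ((1 / 2 : ℝ) • y - s) =
      x + (1 / 4 : ℝ) • y - (1 / 2 : ℝ) • s := by
    module
  have neg_neg : x - (1 / 2 : ℝ) • ((1 / 2 : ℝ) • y - s) =
      x - (1 / 4 : ℝ) • y + (1 / 2 : ℝ) • s := by
    module
  simp only [enorm_wignerKernel, pos_pos, neg_pos, pos_neg, neg_neg]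
  ring

variable [MeasurableSpace E] [BorelSpace E]

theorem enorm_wignerKernel_convolution_sq_le (μ : Measure E) [μ.IsAddLeftInvariant]
    (ψ : 𝓢(E, ℂ)) (x y : E) :
    ‖(wignerKernel ψ x ⋆[.mul ℂ ℂ, μ] wignerKernel ψ x) y‖ₑ ^ 2 ≤
      (∫⁻ s, ‖wignerKernel ψ (x + (1 / 4 : ℝ) • y) s‖ₑ ^ 2 ∂μ) *
        ∫⁻ s, ‖wignerKernel ψ (x - (1 / 4 : ℝ) • y) s‖ₑ ^ 2 ∂μ := by
  have bound : ‖(wignerKernel ψ x ⋆[.mul ℂ ℂ, μ] wignerKernel ψ x) y‖ₑ ≤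
      ∫⁻ s, ‖wignerKernel ψ (x + (1 / 4 : ℝ) • y) s‖ₑ *
        ‖wignerKernel ψ (x - (1 / 4 : ℝ) • y) s‖ₑ ∂μ := by
    calc ‖(wignerKernel ψ x ⋆[.mul ℂ ℂ, μ] wignerKernel ψ x) y‖ₑ
        ≤ ∫⁻ t, ‖wignerKernel ψ x t‖ₑ * ‖wignerKernel ψ x (y - t)‖ₑ ∂μ := by
          simpa only [convolution_def, ContinuousLinearMap.mul_apply', enorm_mul] using
            enorm_integral_le_lintegral_enorm fun t ↦
              ContinuousLinearMap.mul ℂ ℂ (wignerKernel ψ x t) (wignerKernel ψ x (y - t))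
      _ = ∫⁻ s, ‖wignerKernel ψ x ((1 / 2 : ℝ) • y + s)‖ₑ *
            ‖wignerKernel ψ x ((1 / 2 : ℝ) • y - s)‖ₑ ∂μ := by
          rw [← lintegral_add_left_eq_self _ ((1 / 2 : ℝ) • y)]
          congr with s
          congr 3
          module
      _ = _ := by simp only [enorm_wignerKernel_mul_reflect]
  exact (pow_le_pow_left' bound 2).trans <| sq_lintegral_mul_le
    (SchwartzMap.continuous _).enorm.aemeasurable (SchwartzMap.continuous _).enorm.aemeasurable

variable [FiniteDimensional ℝ E]

theorem measurable_lintegral_wignerKernel_sq (μ : Measure E) [SFinite μ] (ψ : 𝓢(E, ℂ)) :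
    Measurable fun x ↦ ∫⁻ y, ‖wignerKernel ψ x y‖ₑ ^ 2 ∂μ :=
  ((continuous_wignerKernel ψ).enorm.measurable.pow_const 2).lintegral_prod_right'

variable (μ : Measure E) [μ.IsAddHaarMeasure]

theorem lintegral_lintegral_wignerKernel_sq (ψ : 𝓢(E, ℂ)) :
    ∫⁻ x, ∫⁻ y, ‖wignerKernel ψ x y‖ₑ ^ 2 ∂μ ∂μ = (∫⁻ x, ‖ψ x‖ₑ ^ 2 ∂μ) ^ 2 := by
  have hψ : Measurable fun x ↦ ‖ψ x‖ₑ ^ 2 := ψ.continuous.enorm.measurable.pow_const 2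
  simp only [enorm_wignerKernel, mul_pow]
  rw [lintegral_lintegral_add_smul_mul_sub_smul μ hψ hψ (by norm_num)]
  norm_num [sq]

theorem lintegral_lintegral_wignerKernel_convolution_sq_le (ψ : 𝓢(E, ℂ)) :
    ∫⁻ x, ∫⁻ y, ‖(wignerKernel ψ x ⋆[.mul ℂ ℂ, μ] wignerKernel ψ x) y‖ₑ ^ 2 ∂μ ∂μ ≤
      2 ^ Module.finrank ℝ E * (∫⁻ x, ‖ψ x‖ₑ ^ 2 ∂μ) ^ 4 := by
  have hG := measurable_lintegral_wignerKernel_sq μ ψ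
  calc _ ≤ ∫⁻ x, ∫⁻ y, (∫⁻ s, ‖wignerKernel ψ (x + (1 / 4 : ℝ) • y) s‖ₑ ^ 2 ∂μ) *
        ∫⁻ s, ‖wignerKernel ψ (x - (1 / 4 : ℝ) • y) s‖ₑ ^ 2 ∂μ ∂μ ∂μ :=
      lintegral_mono fun x ↦ lintegral_mono fun y ↦ enorm_wignerKernel_convolution_sq_le μ ψ x y
    _ = ENNReal.ofReal |((2 * (1 / 4 : ℝ)) ^ Module.finrank ℝ E)⁻¹| *
          ((∫⁻ x, ‖ψ x‖ₑ ^ 2 ∂μ) ^ 2 * (∫⁻ x, ‖ψ x‖ₑ ^ 2 ∂μ) ^ 2) := by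
      rw [lintegral_lintegral_add_smul_mul_sub_smul μ hG hG (by norm_num),
        lintegral_lintegral_wignerKernel_sq]
    _ = _ := by
      rw [← pow_add]
      norm_num [← inv_pow, ENNReal.ofReal_pow]

end WignerKernel

section Wigner

variable {n : ℕ} {hb : ℝ}

theorem wignerFn_eq_fourier (hhb : 0 < hb) (ψ : 𝓢(EuclideanSpace ℝ (Fin n), ℂ))
    (x p : EuclideanSpace ℝ (Fin n)) :
    wignerFn n hb ψ (x, p) =
      (((2 * Real.pi * hb) ^ n)⁻¹ : ℝ) * 𝓕 (wignerKernel ψ x) ((2 * Real.pi * hb)⁻¹ • p) := by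
  have phase (y : EuclideanSpace ℝ (Fin n)) :
      -(Complex.I / hb) * (⟪p, y⟫ : ℝ) =
        ↑(-2 * Real.pi * ⟪y, (2 * Real.pi * hb)⁻¹ • p⟫) * Complex.I := by
    rw [real_inner_smul_right, real_inner_comm]
    push_cast
    field_simp
  rw [wignerFn, Real.rpow_neg (by positivity), Real.rpow_natCast, SchwartzMap.fourier_coe,
    Real.fourier_eq']
  simp only [phase, wignerKernel_apply, smul_eq_mul, mul_assoc]

theorem stronglyMeasurable_wignerFn (hb : ℝ) (ψ : 𝓢(EuclideanSpace ℝ (Fin n), ℂ)) :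
    StronglyMeasurable (wignerFn n hb ψ) := by
  refine (StronglyMeasurable.integral_prod_right ?_).const_mul _
  exact Continuous.stronglyMeasurable (by fun_prop)

theorem lintegral_enorm_wignerFn_pow_succ (hhb : 0 < hb) (ψ : 𝓢(EuclideanSpace ℝ (Fin n), ℂ))
    (k : ℕ) :
    ∫⁻ z, ‖wignerFn n hb ψ z‖ₑ ^ (k + 1) =
      ENNReal.ofReal ((2 * Real.pi * hb) ^ n)⁻¹ ^ k *
        ∫⁻ x, ∫⁻ ξ, ‖𝓕 (wignerKernel ψ x) ξ‖ₑ ^ (k + 1) := by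
  set a := ((2 * Real.pi * hb) ^ n)⁻¹ with ha
  have ha0 : 0 < a := by positivity
  have enorm_apply (x p : EuclideanSpace ℝ (Fin n)) : ‖wignerFn n hb ψ (x, p)‖ₑ =
      ENNReal.ofReal a * ‖𝓕 (wignerKernel ψ x) ((2 * Real.pi * hb)⁻¹ • p)‖ₑ := by
    rw [wignerFn_eq_fourier hhb, ← ha, enorm_mul, ← ofReal_norm (a : ℂ),
      Complex.norm_of_nonneg ha0.le]
  have inner (x : EuclideanSpace ℝ (Fin n)) : ∫⁻ p, ‖wignerFn n hb ψ (x, p)‖ₑ ^ (k + 1) =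
      ENNReal.ofReal a ^ k * ∫⁻ ξ, ‖𝓕 (wignerKernel ψ x) ξ‖ₑ ^ (k + 1) := by
    calc ∫⁻ p, ‖wignerFn n hb ψ (x, p)‖ₑ ^ (k + 1)
        = ENNReal.ofReal a ^ (k + 1) *
            ∫⁻ p, ‖𝓕 (wignerKernel ψ x) ((2 * Real.pi * hb)⁻¹ • p)‖ₑ ^ (k + 1) := by
          rw [← lintegral_const_mul' _ _ (by finiteness)]
          simp only [enorm_apply, mul_pow _ _ (k + 1)]
      _ = ENNReal.ofReal a ^ (k + 1) * (ENNReal.ofReal a⁻¹ *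
            ∫⁻ ξ, ‖𝓕 (wignerKernel ψ x) ξ‖ₑ ^ (k + 1)) := by
          rw [lintegral_comp_smul volume (fun ξ ↦ ‖𝓕 (wignerKernel ψ x) ξ‖ₑ ^ (k + 1))
            (by positivity), finrank_euclideanSpace_fin, inv_pow, ← ha, abs_of_pos (by positivity)]
      _ = _ := by
          rw [ENNReal.ofReal_inv_of_pos ha0, pow_succ, mul_assoc,
            ENNReal.mul_inv_cancel_left (by simpa) (by finiteness)]
  rw [Measure.volume_eq_prod, lintegral_prod _
      ((stronglyMeasurable_wignerFn hb ψ).measurable.enorm.pow_const _).aemeasurable,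
    lintegral_congr inner, lintegral_const_mul' _ _ (by finiteness)]

theorem lintegral_enorm_wignerFn_sq (hhb : 0 < hb) (ψ : 𝓢(EuclideanSpace ℝ (Fin n), ℂ)) :
    ∫⁻ z, ‖wignerFn n hb ψ z‖ₑ ^ 2 =
      ENNReal.ofReal ((2 * Real.pi * hb) ^ n)⁻¹ * (∫⁻ x, ‖ψ x‖ₑ ^ 2) ^ 2 := by
  rw [lintegral_enorm_wignerFn_pow_succ hhb ψ 1, pow_one]
  simp only [Nat.reduceAdd, lintegral_enorm_sq_fourier, lintegral_lintegral_wignerKernel_sq]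

theorem lintegral_enorm_wignerFn_pow_four_le (hhb : 0 < hb)
    (ψ : 𝓢(EuclideanSpace ℝ (Fin n), ℂ)) :
    ∫⁻ z, ‖wignerFn n hb ψ z‖ₑ ^ 4 ≤
      ENNReal.ofReal ((Real.pi * hb) ^ n)⁻¹ * (∫⁻ z, ‖wignerFn n hb ψ z‖ₑ ^ 2) ^ 2 := by
  have hconst : ENNReal.ofReal ((Real.pi * hb) ^ n)⁻¹ =
      2 ^ n * ENNReal.ofReal ((2 * Real.pi * hb) ^ n)⁻¹ := by
    rw [← ENNReal.ofReal_ofNat, ← ENNReal.ofReal_pow zero_le_two,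
      ← ENNReal.ofReal_mul (by positivity), mul_assoc 2, mul_pow 2, mul_inv (2 ^ n),
      mul_inv_cancel_left₀ (by positivity)]
  calc ∫⁻ z, ‖wignerFn n hb ψ z‖ₑ ^ 4
      = ENNReal.ofReal ((2 * Real.pi * hb) ^ n)⁻¹ ^ 3 *
          ∫⁻ x, ∫⁻ y, ‖(wignerKernel ψ x ⋆[.mul ℂ ℂ] wignerKernel ψ x) y‖ₑ ^ 2 := by
        rw [lintegral_enorm_wignerFn_pow_succ hhb ψ 3]
        simp only [Nat.reduceAdd, lintegral_enorm_pow_four_fourier]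
    _ ≤ ENNReal.ofReal ((2 * Real.pi * hb) ^ n)⁻¹ ^ 3 * (2 ^ n * (∫⁻ x, ‖ψ x‖ₑ ^ 2) ^ 4) := by
        gcongr
        simpa using lintegral_lintegral_wignerKernel_convolution_sq_le volume ψ
    _ = _ := by
        rw [lintegral_enorm_wignerFn_sq hhb, hconst]
        ring

theorem lintegral_enorm_wignerFn_sq_ne_zero (hhb : 0 < hb)
    {ψ : 𝓢(EuclideanSpace ℝ (Fin n), ℂ)} (hW0 : wignerFn n hb ψ ≠ 0) :
    ∫⁻ z, ‖wignerFn n hb ψ z‖ₑ ^ 2 ≠ 0 := by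
  contrapose! hW0
  have hψ : ∫⁻ x, ‖ψ x‖ₑ ^ 2 = 0 := by
    simpa [lintegral_enorm_wignerFn_sq hhb, (show 0 < 2 * Real.pi * hb by positivity)] using hW0
  have hψ0 : ⇑ψ = 0 := by
    rw [lintegral_eq_zero_iff (ψ.continuous.enorm.measurable.pow_const 2)] at hψ
    exact (ψ.continuous.ae_eq_iff_eq volume continuous_zero).mp
      (hψ.mono fun x hx ↦ by simpa using hx)
  ext z
  simp [wignerFn, hψ0]

theorem memLp_two_wignerFn (hhb : 0 < hb) (ψ : 𝓢(EuclideanSpace ℝ (Fin n), ℂ)) :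
    MemLp (wignerFn n hb ψ) 2 := by
  refine ⟨(stronglyMeasurable_wignerFn hb ψ).aestronglyMeasurable, ?_⟩
  rw [eLpNorm_lt_top_iff_lintegral_rpow_enorm_lt_top two_ne_zero ofNat_ne_top]
  simp only [ENNReal.toReal_ofNat, ENNReal.rpow_two, lintegral_enorm_wignerFn_sq hhb,
    lintegral_enorm_sq_eq_ofReal_integral (ψ.memLp 2)]
  finiteness

theorem wigner_concentration_volume_general (hhb : 0 < hb)
    (ψ : 𝓢(EuclideanSpace ℝ (Fin n), ℂ)) (hW0 : wignerFn n hb ψ ≠ 0)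
    (X : Set (EuclideanSpace ℝ (Fin n) × EuclideanSpace ℝ (Fin n))) {c : ℝ} (hc : 0 ≤ c)
    (hconc : c * ∫ z, ‖wignerFn n hb ψ z‖ ^ 2 ≤ ∫ z in X, ‖wignerFn n hb ψ z‖ ^ 2) :
    ENNReal.ofReal ((Real.pi * hb) ^ n * c ^ 2) ≤ volume X := by
  have hW := memLp_two_wignerFn hhb ψ
  have hM := lintegral_enorm_sq_eq_ofReal_integral hW
  have concentrated : ENNReal.ofReal c * ∫⁻ z, ‖wignerFn n hb ψ z‖ₑ ^ 2 ≤
      ∫⁻ z in X, ‖wignerFn n hb ψ z‖ₑ ^ 2 := by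
    rw [hM, lintegral_enorm_sq_eq_ofReal_integral (hW.restrict X), ← ENNReal.ofReal_mul hc]
    exact ENNReal.ofReal_le_ofReal hconc
  have lieb : ∫⁻ z, (‖wignerFn n hb ψ z‖ₑ ^ 2) ^ 2 ≤
      ENNReal.ofReal ((Real.pi * hb) ^ n)⁻¹ * (∫⁻ z, ‖wignerFn n hb ψ z‖ₑ ^ 2) ^ 2 := by
    simpa only [← pow_mul, Nat.reduceMul] using lintegral_enorm_wignerFn_pow_four_le hhb ψ
  have bound : ENNReal.ofReal c ^ 2 ≤ ENNReal.ofReal ((Real.pi * hb) ^ n)⁻¹ * volume X :=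
    sq_le_mul_measure_of_mul_lintegral_le (hW.aestronglyMeasurable.enorm.pow_const 2)
      (lintegral_enorm_wignerFn_sq_ne_zero hhb hW0) (hM ▸ ENNReal.ofReal_ne_top) concentrated lieb
  rwa [ENNReal.ofReal_inv_of_pos (by positivity),
    ← ENNReal.mul_le_iff_le_inv (ENNReal.ofReal_pos.mpr (by positivity)).ne' ENNReal.ofReal_ne_top,
    ← ENNReal.ofReal_pow hc, ← ENNReal.ofReal_mul (by positivity)] at bound

end Wigner

/-- If the Wigner function of an even Schwartz function is `ε`-concentrated in a measurable
set `X ⊂ ℝ²ⁿ` with `0 ≤ ε ≤ 1/2`, then `Vol(X) ≥ (πħ)ⁿ(1 − 2ε)`. -/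
theorem wigner_concentration_volume (n : ℕ) (hb : ℝ) (hhb : 0 < hb)
    (ψ : SchwartzMap (EuclideanSpace ℝ (Fin n)) ℂ) (hψeven : ∀ x, ψ (-x) = ψ x)
    (hW0 : wignerFn n hb ψ ≠ 0)
    (X : Set (EuclideanSpace ℝ (Fin n) × EuclideanSpace ℝ (Fin n))) (hX : MeasurableSet X)
    (ε : ℝ) (hε0 : 0 ≤ ε) (hε : ε ≤ 1 / 2)
    (hconc : (1 - ε ^ 2) *
        ∫ z : EuclideanSpace ℝ (Fin n) × EuclideanSpace ℝ (Fin n), ‖wignerFn n hb ψ z‖ ^ 2 ≤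
        ∫ z in X, ‖wignerFn n hb ψ z‖ ^ 2) :
    ENNReal.ofReal ((Real.pi * hb) ^ n * (1 - 2 * ε)) ≤ volume X :=
  (ENNReal.ofReal_le_ofReal (by gcongr; nlinarith [sq_nonneg (ε ^ 2)])).trans <|
    wigner_concentration_volume_general hhb ψ hW0 X (by nlinarith) hconc
end

section
/- Let ψ in the Schwartz space on ℝⁿ be even (ψ(−x) = ψ(x)) with Wψ ≠ 0, and suppose the Wigner function Wψ is ε-concentrated in the ball B^{2n}(√ħ) of radius √ħ centered at the origin of ℝ²ⁿ, i.e. ∫_{B^{2n}(√ħ)} |Wψ(z)|² dz ≥ (1−ε²)‖Wψ‖²_{L²(ℝ²ⁿ)} with 0 ≤ ε ≤ 1. Then 1/2 − 1/(2·n!) ≤ ε, i.e. ε ≥ 1/2 − 1/(2·n!). -/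
open MeasureTheory
open scoped RealInnerProductSpace

/-- The closed Euclidean ball `B²ⁿ(√ħ) = {z ∈ ℝ²ⁿ : |z|² ≤ ħ}` in phase space. -/
def phaseBall (n : ℕ) (hb : ℝ) : Set (EuclideanSpace ℝ (Fin n) × EuclideanSpace ℝ (Fin n)) :=
  {z | ‖z.1‖ ^ 2 + ‖z.2‖ ^ 2 ≤ hb}

/-!
For even (or odd) `ψ` the Wigner function is, up to scaling, a unimodular multiple of its own
symplectic Fourier transform. So if it is `ε`-concentrated in `B`, its Fourier transform is
`ε`-concentrated in a rotated copy of `B`, and the Donoho–Stark inequality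
`1 - ε - ε ≤ |S|^(1/2) |T|^(1/2)` gives `1 - 2ε ≤ |B| / (πħ)ⁿ`. For the ball of radius `√ħ` the
right-hand side is `1 / n!`.
-/

open scoped FourierTransform ENNReal SchwartzMap ComplexConjugate

section Uncertainty

variable {V F : Type*} [NormedAddCommGroup V] [InnerProductSpace ℝ V] [FiniteDimensional ℝ V]
  [MeasurableSpace V] [BorelSpace V] [NormedAddCommGroup F]

section NormedSpace

variable [NormedSpace ℂ F]

lemma continuous_fourier {f : V → F} (hf : Integrable f) : Continuous (𝓕 f) :=
  VectorFourier.fourierIntegral_continuous Real.continuous_fourierChar continuous_inner hf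

lemma fourier_add_of_integrable {f g : V → F} (hf : Integrable f) (hg : Integrable g) :
    𝓕 (f + g) = 𝓕 f + 𝓕 g :=
  VectorFourier.fourierIntegral_add Real.continuous_fourierChar continuous_inner hf hg

lemma enorm_fourier_le_eLpNorm_one (f : V → F) (ξ : V) : ‖𝓕 f ξ‖ₑ ≤ eLpNorm f 1 volume := by
  rw [Real.fourier_eq, eLpNorm_one_eq_lintegral_enorm]
  refine (enorm_integral_le_lintegral_enorm _).trans_eq (lintegral_congr fun v => ?_)
  rw [← ofReal_norm, Circle.norm_smul, ofReal_norm]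

lemma eLpNorm_two_restrict_fourier_le {f : V → F} (hf : AEStronglyMeasurable f) {S : Set V}
    (hfS : f.support ⊆ S) (T : Set V) :
    eLpNorm (𝓕 f) 2 (volume.restrict T) ≤
      (volume S * volume T) ^ (1 / 2 : ℝ) * eLpNorm f 2 volume := by
  have norm_one_le : eLpNorm f 1 volume ≤ eLpNorm f 2 volume * volume S ^ (1 / 2 : ℝ) := by
    have h := eLpNorm_le_eLpNorm_mul_rpow_measure_univ (p := 1) (q := 2) (by norm_num)
      (hf.restrict (s := S))
    rw [eLpNorm_restrict_eq_of_support_subset hfS, eLpNorm_restrict_eq_of_support_subset hfS,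
      Measure.restrict_apply_univ] at h
    norm_num at h ⊢
    exact h
  calc eLpNorm (𝓕 f) 2 (volume.restrict T)
      ≤ eLpNorm (fun _ : V => eLpNorm f 1 volume) 2 (volume.restrict T) :=
        eLpNorm_mono_enorm fun ξ => enorm_fourier_le_eLpNorm_one f ξ
    _ = eLpNorm f 1 volume * volume T ^ (1 / 2 : ℝ) := by
        simp [eLpNorm_const' _ two_ne_zero ENNReal.ofNat_ne_top]
    _ ≤ eLpNorm f 2 volume * volume S ^ (1 / 2 : ℝ) * volume T ^ (1 / 2 : ℝ) :=
        mul_le_mul_left norm_one_le _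
    _ = (volume S * volume T) ^ (1 / 2 : ℝ) * eLpNorm f 2 volume := by
        rw [ENNReal.mul_rpow_of_nonneg _ _ (by norm_num)]; ring

lemma eLpNorm_ne_zero_of_norm_fourier_eq {f : V → F} (hf : Integrable f) (R : V ≃ₗᵢ[ℝ] V)
    (hfR : ∀ ξ, ‖𝓕 f ξ‖ = ‖f (R ξ)‖) (hf₀ : f ≠ 0) : eLpNorm f 2 volume ≠ 0 := by
  contrapose! hf₀
  rw [eLpNorm_eq_zero_iff hf.aestronglyMeasurable two_ne_zero] at hf₀
  ext x
  have fourier_zero : 𝓕 f (R.symm x) = 0 := by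
    rw [Real.fourier_congr_ae hf₀, Real.fourier_eq]
    simp
  simpa [fourier_zero] using (hfR (R.symm x)).symm

end NormedSpace

variable [InnerProductSpace ℂ F] [CompleteSpace F]

lemma coeFn_fourier_toLp_ae_eq {f : V → F} (hf : Integrable f) (hf₂ : MemLp f 2) :
    (𝓕 (hf₂.toLp f) : Lp F 2 volume) =ᵐ[volume] 𝓕 f := by
  refine ae_eq_of_integral_contDiff_smul_eq ((Lp.memLp _).locallyIntegrable (by norm_num))
    (continuous_fourier hf).locallyIntegrable fun g g_smooth g_compact => ?_
  have g_compact' : HasCompactSupport fun x => (g x : ℂ) := g_compact.comp_left Complex.ofReal_zero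
  let φ : 𝓢(V, ℂ) := g_compact'.toSchwartzMap (Complex.ofRealCLM.contDiff.comp g_smooth)
  have smul_eq (h : V → F) : ∫ x, g x • h x = ∫ x, φ x • h x := rfl
  have lp_duality := congrArg (fun D : TemperedDistribution V F => D φ)
    (Lp.fourier_toTemperedDistribution_eq (hf₂.toLp f))
  simp only [TemperedDistribution.fourier_apply, Lp.toTemperedDistribution_apply] at lp_duality
  calc ∫ x, g x • (𝓕 (hf₂.toLp f) : Lp F 2 volume) x
      = ∫ x, 𝓕 φ x • hf₂.toLp f x := by rw [smul_eq, lp_duality]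
    _ = ∫ x, 𝓕 (φ : V → ℂ) x • f x :=
        integral_congr_ae <| hf₂.coeFn_toLp.mono fun x hx => by
          simp only [hx, SchwartzMap.fourier_coe]
    _ = ∫ x, φ x • 𝓕 f x := by
        simpa using!
          VectorFourier.integral_fourierIntegral_smul_eq_flip (L := innerₗ V)
            Real.continuous_fourierChar continuous_inner φ.integrable hf
    _ = ∫ x, g x • 𝓕 f x := (smul_eq _).symm

lemma eLpNorm_two_fourier {f : V → F} (hf : Integrable f) (hf₂ : MemLp f 2) :
    eLpNorm (𝓕 f) 2 volume = eLpNorm f 2 volume := by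
  rw [← eLpNorm_congr_ae (coeFn_fourier_toLp_ae_eq hf hf₂), ← Lp.enorm_def, ← ofReal_norm,
    Lp.norm_fourier_eq, ofReal_norm, Lp.enorm_def, eLpNorm_congr_ae hf₂.coeFn_toLp]

theorem donoho_stark {f : V → F} (hf : Integrable f) (hf₂ : MemLp f 2) {S T : Set V}
    (hS : MeasurableSet S) (hT : MeasurableSet T) :
    eLpNorm f 2 volume ≤ eLpNorm f 2 (volume.restrict Sᶜ) + eLpNorm (𝓕 f) 2 (volume.restrict Tᶜ) +
      (volume S * volume T) ^ (1 / 2 : ℝ) * eLpNorm f 2 volume := by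
  have on_T : eLpNorm (𝓕 f) 2 (volume.restrict T) ≤
      (volume S * volume T) ^ (1 / 2 : ℝ) * eLpNorm f 2 volume +
        eLpNorm f 2 (volume.restrict Sᶜ) := by
    have hfS := hf.indicator hS
    have hfSc := hf.indicator hS.compl
    calc eLpNorm (𝓕 f) 2 (volume.restrict T)
        = eLpNorm (𝓕 (S.indicator f) + 𝓕 (Sᶜ.indicator f)) 2 (volume.restrict T) := by
          rw [← fourier_add_of_integrable hfS hfSc, Set.indicator_self_add_compl]
      _ ≤ eLpNorm (𝓕 (S.indicator f)) 2 (volume.restrict T) +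
            eLpNorm (𝓕 (Sᶜ.indicator f)) 2 (volume.restrict T) :=
          eLpNorm_add_le (continuous_fourier hfS).aestronglyMeasurable
            (continuous_fourier hfSc).aestronglyMeasurable one_le_two
      _ ≤ (volume S * volume T) ^ (1 / 2 : ℝ) * eLpNorm (S.indicator f) 2 volume +
            eLpNorm (𝓕 (Sᶜ.indicator f)) 2 volume :=
          add_le_add (eLpNorm_two_restrict_fourier_le hfS.aestronglyMeasurable
            Set.support_indicator_subset T) (eLpNorm_restrict_le _ _ _ _)
      _ = (volume S * volume T) ^ (1 / 2 : ℝ) * eLpNorm (S.indicator f) 2 volume +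
            eLpNorm f 2 (volume.restrict Sᶜ) := by
          rw [eLpNorm_two_fourier hfSc (hf₂.indicator hS.compl),
            eLpNorm_indicator_eq_eLpNorm_restrict hS.compl]
      _ ≤ _ := add_le_add_left (mul_le_mul_right (eLpNorm_indicator_le f) _) _
  calc eLpNorm f 2 volume = eLpNorm (T.indicator (𝓕 f) + Tᶜ.indicator (𝓕 f)) 2 volume := by
        rw [Set.indicator_self_add_compl, eLpNorm_two_fourier hf hf₂]
    _ ≤ eLpNorm (𝓕 f) 2 (volume.restrict T) + eLpNorm (𝓕 f) 2 (volume.restrict Tᶜ) := by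
        have hmeas := (continuous_fourier hf).aestronglyMeasurable (μ := volume)
        rw [← eLpNorm_indicator_eq_eLpNorm_restrict hT,
          ← eLpNorm_indicator_eq_eLpNorm_restrict hT.compl]
        exact eLpNorm_add_le (hmeas.indicator hT) (hmeas.indicator hT.compl) one_le_two
    _ ≤ _ := (add_le_add_left on_T _).trans_eq (by ring)

theorem one_le_two_mul_add_volume_of_norm_fourier_eq {f : V → F} (hf : Integrable f)
    (hf₂ : MemLp f 2) (R : V ≃ₗᵢ[ℝ] V) (hfR : ∀ ξ, ‖𝓕 f ξ‖ = ‖f (R ξ)‖) (hf₀ : f ≠ 0) {B : Set V}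
    (hB : MeasurableSet B) {δ : ℝ≥0∞}
    (hδ : eLpNorm f 2 (volume.restrict Bᶜ) ≤ δ * eLpNorm f 2 volume) :
    1 ≤ 2 * δ + volume B := by
  have fourier_outside : eLpNorm (𝓕 f) 2 (volume.restrict (R ⁻¹' B)ᶜ) =
      eLpNorm f 2 (volume.restrict Bᶜ) := by
    rw [← Set.preimage_compl, eLpNorm_congr_norm_ae (.of_forall hfR)]
    exact eLpNorm_comp_measurePreserving hf₂.aestronglyMeasurable.restrict
      (R.measurePreserving.restrict_preimage hB.compl)
  have volume_preimage : volume (R ⁻¹' B) = volume B :=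
    R.measurePreserving.measure_preimage hB.nullMeasurableSet
  have sqrt_volume_sq : (volume B * volume B) ^ (1 / 2 : ℝ) = volume B := by
    rw [← sq, ← ENNReal.rpow_natCast, ← ENNReal.rpow_mul]
    norm_num
  have key := donoho_stark hf hf₂ hB (R.continuous.measurable hB)
  rw [fourier_outside, volume_preimage, sqrt_volume_sq] at key
  refine (ENNReal.mul_le_mul_iff_left (eLpNorm_ne_zero_of_norm_fourier_eq hf R hfR hf₀)
    hf₂.eLpNorm_ne_top).1 ?_
  calc 1 * eLpNorm f 2 volume
      ≤ δ * eLpNorm f 2 volume + δ * eLpNorm f 2 volume + volume B * eLpNorm f 2 volume := by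
        rw [one_mul]
        exact key.trans (add_le_add_left (add_le_add hδ hδ) _)
    _ = (2 * δ + volume B) * eLpNorm f 2 volume := by ring

end Uncertainty

lemma eLpNorm_two_eq_ofReal_sqrt_integral {α F : Type*} [MeasurableSpace α] {μ : Measure α}
    [NormedAddCommGroup F] {f : α → F} (hf : MemLp f 2 μ) :
    eLpNorm f 2 μ = ENNReal.ofReal √(∫ x, ‖f x‖ ^ 2 ∂μ) := by
  rw [hf.eLpNorm_eq_integral_rpow_norm two_ne_zero ENNReal.ofNat_ne_top, Real.sqrt_eq_rpow]
  norm_num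

lemma eLpNorm_two_restrict_compl_le_of_concentrated {α F : Type*} [MeasurableSpace α]
    {μ : Measure α} [NormedAddCommGroup F] {f : α → F} (hf : MemLp f 2 μ) {B : Set α}
    (hB : MeasurableSet B) {ε : ℝ} (hε : 0 ≤ ε)
    (hconc : (1 - ε ^ 2) * ∫ x, ‖f x‖ ^ 2 ∂μ ≤ ∫ x in B, ‖f x‖ ^ 2 ∂μ) :
    eLpNorm f 2 (μ.restrict Bᶜ) ≤ ENNReal.ofReal ε * eLpNorm f 2 μ := by
  have norm_sq_integrable : Integrable (fun x => ‖f x‖ ^ 2) μ := hf.integrable_norm_pow two_ne_zero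
  have outside_le : ∫ x in Bᶜ, ‖f x‖ ^ 2 ∂μ ≤ ε ^ 2 * ∫ x, ‖f x‖ ^ 2 ∂μ := by
    linarith [integral_add_compl hB norm_sq_integrable]
  rw [eLpNorm_two_eq_ofReal_sqrt_integral hf, eLpNorm_two_eq_ofReal_sqrt_integral (hf.restrict Bᶜ),
    ← ENNReal.ofReal_mul hε]
  refine ENNReal.ofReal_le_ofReal ((Real.sqrt_le_sqrt outside_le).trans_eq ?_)
  rw [Real.sqrt_mul (sq_nonneg ε), Real.sqrt_sq hε]

section RapidDecay

variable {E F G : Type*} [NormedAddCommGroup E] [NormedAddCommGroup F] [NormedAddCommGroup G]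

/-- `f` decays faster than every power of `‖x‖`. Unlike for Schwartz functions, nothing is required
of the derivatives, so this survives taking absolute values inside an integral. -/
def RapidlyDecreasing (f : E → F) : Prop :=
  ∀ k : ℕ, ∃ C : ℝ, ∀ x, (1 + ‖x‖) ^ k * ‖f x‖ ≤ C

namespace RapidlyDecreasing

variable {f : E → F} {g : E → G}

lemma comp_of_norm_le (hf : RapidlyDecreasing f) {T : G → E} (hT : ∀ x, ‖x‖ ≤ ‖T x‖) :
    RapidlyDecreasing (f ∘ T) := by
  intro k
  obtain ⟨C, hC⟩ := hf k
  refine ⟨C, fun x => le_trans ?_ (hC (T x))⟩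
  rw [Function.comp_apply]
  gcongr
  exact hT x

lemma weight_mul_norm (hf : RapidlyDecreasing f) (k : ℕ) :
    RapidlyDecreasing fun x => (1 + ‖x‖) ^ k * ‖f x‖ := by
  intro l
  obtain ⟨C, hC⟩ := hf (l + k)
  refine ⟨C, fun x => (le_of_eq ?_).trans (hC x)⟩
  rw [Real.norm_of_nonneg (by positivity), pow_add, mul_assoc]

variable [MeasurableSpace E] {μ : Measure E}

lemma memLp (hf : RapidlyDecreasing f) (hmeas : AEStronglyMeasurable f μ) [μ.HasTemperateGrowth]
    [OpensMeasurableSpace E] (p : ℝ≥0∞) : MemLp f p μ := by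
  obtain ⟨k, hk⟩ := Measure.HasTemperateGrowth.exists_eLpNorm_lt_top p ‹μ.HasTemperateGrowth›
  obtain ⟨C, hC⟩ := hf k
  have weight_meas : Measurable fun x : E => (1 + ‖x‖) ^ (-k : ℝ) := by fun_prop
  refine MemLp.of_le_mul (c := C) ⟨weight_meas.aestronglyMeasurable, hk⟩ hmeas
    (.of_forall fun x => ?_)
  rw [Real.norm_of_nonneg (by positivity), Real.rpow_neg (by positivity), Real.rpow_natCast,
    ← div_eq_mul_inv, le_div_iff₀' (by positivity)]
  exact hC x

lemma integrable (hf : RapidlyDecreasing f) (hmeas : AEStronglyMeasurable f μ)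
    [μ.HasTemperateGrowth] [OpensMeasurableSpace E] : Integrable f μ :=
  memLp_one_iff_integrable.1 (hf.memLp hmeas 1)

-- Peetre's inequality `1 + ‖x‖ ≤ (1 + ‖t‖) (1 + ‖x - t‖)` distributes the weight over the factors.
lemma integral_norm_mul_norm_sub (hf : RapidlyDecreasing f) (hmeas : AEStronglyMeasurable f μ)
    (hg : RapidlyDecreasing g) [μ.HasTemperateGrowth] [OpensMeasurableSpace E] :
    RapidlyDecreasing fun x => ∫ t, ‖f t‖ * ‖g (x - t)‖ ∂μ := by
  intro k
  obtain ⟨C, hC⟩ := hg k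
  have weight_meas : Measurable fun x : E => (1 + ‖x‖) ^ k := by fun_prop
  have weight_integrable : Integrable (fun t => (1 + ‖t‖) ^ k * ‖f t‖) μ :=
    (hf.weight_mul_norm k).integrable (weight_meas.aestronglyMeasurable.mul hmeas.norm)
  refine ⟨∫ t, (1 + ‖t‖) ^ k * ‖f t‖ * C ∂μ, fun x => ?_⟩
  rw [Real.norm_of_nonneg (integral_nonneg fun t => by positivity), ← integral_const_mul]
  refine integral_mono_of_nonneg (.of_forall fun t => by positivity)
    (weight_integrable.mul_const C) (.of_forall fun t => ?_)
  have peetre : 1 + ‖x‖ ≤ (1 + ‖t‖) * (1 + ‖x - t‖) := by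
    have : ‖x‖ ≤ ‖t‖ + ‖x - t‖ := by simpa using norm_add_le t (x - t)
    nlinarith [mul_nonneg (norm_nonneg t) (norm_nonneg (x - t))]
  calc (1 + ‖x‖) ^ k * (‖f t‖ * ‖g (x - t)‖)
      ≤ ((1 + ‖t‖) * (1 + ‖x - t‖)) ^ k * (‖f t‖ * ‖g (x - t)‖) := by gcongr
    _ = (1 + ‖t‖) ^ k * ‖f t‖ * ((1 + ‖x - t‖) ^ k * ‖g (x - t)‖) := by rw [mul_pow]; ring
    _ ≤ (1 + ‖t‖) ^ k * ‖f t‖ * C := mul_le_mul_of_nonneg_left (hC _) (by positivity)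

lemma of_le_fst_of_le_snd {E₁ E₂ F₁ F₂ : Type*} [NormedAddCommGroup E₁] [NormedAddCommGroup E₂]
    [NormedAddCommGroup F₁] [NormedAddCommGroup F₂] {h : WithLp 2 (E₁ × E₂) → F} {a : E₁ → F₁}
    {b : E₂ → F₂} (ha : RapidlyDecreasing a) (hb : RapidlyDecreasing b)
    (hha : ∀ z, ‖h z‖ ≤ ‖a z.fst‖) (hhb : ∀ z, ‖h z‖ ≤ ‖b z.snd‖) : RapidlyDecreasing h := by
  intro k
  obtain ⟨A, hA⟩ := ha k
  obtain ⟨B, hB⟩ := hb k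
  have bound_of_le {t c : ℝ} (z : WithLp 2 (E₁ × E₂)) (ht : ‖z‖ ≤ 2 * t) (ht₀ : 0 ≤ t)
      (hc : ‖h z‖ ≤ c) : (1 + ‖z‖) ^ k * ‖h z‖ ≤ 2 ^ k * ((1 + t) ^ k * c) := by
    rw [← mul_assoc, ← mul_pow]
    gcongr
    linarith
  have norm_le (z : WithLp 2 (E₁ × E₂)) : ‖z‖ ≤ ‖z.fst‖ + ‖z.snd‖ := by
    rw [WithLp.prod_norm_eq_of_L2]
    exact Real.sqrt_le_iff.2 ⟨by positivity, by nlinarith [norm_nonneg z.fst, norm_nonneg z.snd]⟩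
  refine ⟨2 ^ k * max A B, fun z => ?_⟩
  rcases le_total ‖z.fst‖ ‖z.snd‖ with hle | hle
  · refine (bound_of_le z (by linarith [norm_le z]) (norm_nonneg z.snd) (hhb z)).trans ?_
    gcongr
    exact (hB _).trans (le_max_right A B)
  · refine (bound_of_le z (by linarith [norm_le z]) (norm_nonneg z.fst) (hha z)).trans ?_
    gcongr
    exact (hA _).trans (le_max_left A B)

end RapidlyDecreasing

lemma rapidlyDecreasing_schwartzMap [NormedSpace ℝ E] [NormedSpace ℝ F] (φ : 𝓢(E, F)) :
    RapidlyDecreasing φ := by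
  intro k
  have h := SchwartzMap.one_add_le_sup_seminorm_apply (𝕜 := ℝ) (m := (k, 0)) le_rfl le_rfl φ
  simp only [norm_iteratedFDeriv_zero] at h
  exact ⟨_, h⟩

end RapidDecay

section SchwartzProduct

variable {E F₁ F₂ F₃ : Type*} [NormedAddCommGroup E] [InnerProductSpace ℝ E]
  [FiniteDimensional ℝ E] [MeasurableSpace E] [BorelSpace E]
  [NormedAddCommGroup F₁] [NormedSpace ℂ F₁] [CompleteSpace F₁]
  [NormedAddCommGroup F₂] [NormedSpace ℂ F₂] [CompleteSpace F₂]
  [NormedAddCommGroup F₃] [NormedSpace ℂ F₃] [CompleteSpace F₃]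

lemma fourier_pairing_apply (B : F₁ →L[ℂ] F₂ →L[ℂ] F₃) (f : 𝓢(E, F₁)) (g : 𝓢(E, F₂)) (ξ : E) :
    𝓕 (SchwartzMap.pairing B f g) ξ = ∫ η, B (𝓕 f η) (𝓕 g (ξ - η)) := by
  have inverse_form : 𝓕⁻ (SchwartzMap.pairing B f g) (-ξ) =
      ∫ η, B (𝓕⁻ f η) (𝓕⁻ g (-ξ - η)) := by
    have h := SchwartzMap.convolution_apply B (𝓕⁻ f) (𝓕⁻ g) (-ξ)
    simpa [SchwartzMap.convolution, convolution] using h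
  calc 𝓕 (SchwartzMap.pairing B f g) ξ = 𝓕⁻ (SchwartzMap.pairing B f g) (-ξ) := by
        rw [SchwartzMap.fourier_coe, SchwartzMap.fourierInv_coe, Real.fourierInv_eq_fourier_neg,
          neg_neg]
    _ = ∫ η, B (𝓕⁻ f (-η)) (𝓕⁻ g (-ξ - -η)) := by
        rw [inverse_form, ← integral_neg_eq_self]
    _ = ∫ η, B (𝓕 f η) (𝓕 g (ξ - η)) := by
        simp only [SchwartzMap.fourier_coe, SchwartzMap.fourierInv_coe,
          Real.fourierInv_eq_fourier_neg, neg_neg, neg_sub, sub_neg_eq_add, neg_add_eq_sub]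

end SchwartzProduct

section WignerTransform

variable {E : Type*} [NormedAddCommGroup E] [InnerProductSpace ℝ E]

/-- The phase space `E × E` of points `(x, p)`, with its Euclidean inner product. -/
abbrev PhaseSpace (E : Type*) := WithLp 2 (E × E)

/-- The rotation `(a, b) ↦ (-b, a)` of phase space, that is, multiplication by the standard complex
structure. -/
noncomputable def phaseRotation (E : Type*) [NormedAddCommGroup E] [InnerProductSpace ℝ E] :
    PhaseSpace E ≃ₗᵢ[ℝ] PhaseSpace E :=
  (LinearIsometryEquiv.withLpProdComm 2 ℝ E E).trans
    (LinearIsometryEquiv.withLpProdCongr 2 (.neg ℝ) (.refl ℝ E))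

lemma phaseRotation_toLp (a b : E) : phaseRotation E (.toLp 2 (a, b)) = .toLp 2 (-b, a) := rfl

/-- The Schwartz function `v ↦ ψ (x + v) * conj (ψ (x - v))`, whose Fourier transform in `v` is the
Wigner function of `ψ` at position `x`. -/
noncomputable def wignerProduct (ψ : 𝓢(E, ℂ)) (x : E) : 𝓢(E, ℂ) :=
  SchwartzMap.pairing (ContinuousLinearMap.mul ℂ ℂ) (ψ.compSubConstCLM ℝ (-x))
    (((ψ.postcompCLM (Complex.conjCLE : ℂ →L[ℝ] ℂ)).compCLMOfContinuousLinearEquiv ℝ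
      (ContinuousLinearEquiv.neg ℝ)).compSubConstCLM ℝ x)

lemma wignerProduct_apply (ψ : 𝓢(E, ℂ)) (x v : E) :
    wignerProduct ψ x v = ψ (x + v) * conj (ψ (x - v)) := by
  simp [wignerProduct, add_comm]

lemma wignerProduct_swap {ψ : 𝓢(E, ℂ)} {c : ℂ} (hψ : ∀ x, ψ (-x) = c * ψ x) (x v : E) :
    wignerProduct ψ x v = conj c * wignerProduct ψ v x := by
  rw [wignerProduct_apply, wignerProduct_apply, ← neg_sub v x, hψ, map_mul, add_comm]
  ring

variable [FiniteDimensional ℝ E] [MeasurableSpace E] [BorelSpace E]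

/-- The Wigner function of `ψ` for `ħ = 1 / π`, where the substitution `y = 2 v` absorbs the
prefactor and no constants appear in `fourier_wignerTransform`. -/
noncomputable def wignerTransform (ψ : 𝓢(E, ℂ)) (z : PhaseSpace E) : ℂ :=
  𝓕 (wignerProduct ψ z.fst) z.snd

lemma stronglyMeasurable_wignerTransform (ψ : 𝓢(E, ℂ)) :
    StronglyMeasurable (wignerTransform ψ) := by
  unfold wignerTransform
  simp only [SchwartzMap.fourier_coe, Real.fourier_eq, wignerProduct_apply, Circle.smul_def]
  refine StronglyMeasurable.integral_prod_right (Continuous.stronglyMeasurable ?_)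
  have := ψ.continuous
  have := Real.continuous_fourierChar
  fun_prop

lemma norm_wignerTransform_le_integral (ψ : 𝓢(E, ℂ)) (z : PhaseSpace E) :
    ‖wignerTransform ψ z‖ ≤ ∫ t, ‖ψ t‖ * ‖ψ ((2 : ℝ) • z.fst - t)‖ := by
  rw [← integral_add_left_eq_self _ z.fst]
  calc ‖wignerTransform ψ z‖ ≤ ∫ v, ‖wignerProduct ψ z.fst v‖ := by
        rw [wignerTransform, SchwartzMap.fourier_coe]
        exact VectorFourier.norm_fourierIntegral_le_integral_norm _ _ _ _ _
    _ = ∫ v, ‖ψ (z.fst + v)‖ * ‖ψ ((2 : ℝ) • z.fst - (z.fst + v))‖ := by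
        simp only [wignerProduct_apply, norm_mul, RCLike.norm_conj, two_smul,
          add_sub_add_left_eq_sub]

lemma fourier_conj_comp_neg (f : E → ℂ) (ξ : E) : 𝓕 (fun v => conj (f (-v))) ξ = conj (𝓕 f ξ) := by
  rw [Real.fourier_eq, Real.fourier_eq, ← integral_conj, ← integral_neg_eq_self]
  simp [Circle.smul_def, ← Circle.coe_inv_eq_conj, ← AddChar.map_neg_eq_inv]

lemma norm_fourier_comp_sub {F : Type*} [NormedAddCommGroup F] [NormedSpace ℂ F] (f : E → F)
    (a ξ : E) : ‖𝓕 (fun v => f (v - a)) ξ‖ = ‖𝓕 f ξ‖ := by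
  have h := congrFun (VectorFourier.fourierIntegral_comp_add_right Real.fourierChar volume
    (innerₗ E) f (-a)) ξ
  simp only [Function.comp_def, ← sub_eq_add_neg] at h
  exact (congrArg norm h).trans (Circle.norm_smul _ _)

lemma norm_wignerTransform_le_integral_fourier (ψ : 𝓢(E, ℂ)) (z : PhaseSpace E) :
    ‖wignerTransform ψ z‖ ≤ ∫ η, ‖𝓕 ψ η‖ * ‖𝓕 ψ (z.snd - η)‖ := by
  rw [wignerTransform, wignerProduct, fourier_pairing_apply]
  have norm_fourier_translate (ξ : E) : ‖𝓕 (fun v => ψ (v - -z.fst)) ξ‖ = ‖𝓕 (⇑ψ) ξ‖ :=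
    norm_fourier_comp_sub ψ _ ξ
  have norm_fourier_reflect (ξ : E) :
      ‖𝓕 (fun v => conj (ψ (-(v - z.fst)))) ξ‖ = ‖𝓕 (⇑ψ) ξ‖ := by
    rw [norm_fourier_comp_sub fun v => conj (ψ (-v)), fourier_conj_comp_neg, RCLike.norm_conj]
  refine (norm_integral_le_integral_norm _).trans_eq (integral_congr_ae (.of_forall fun η => ?_))
  exact (norm_mul _ _).trans
    (congrArg₂ (· * ·) (norm_fourier_translate η) (norm_fourier_reflect (z.snd - η)))

lemma rapidlyDecreasing_wignerTransform (ψ : 𝓢(E, ℂ)) :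
    RapidlyDecreasing (wignerTransform ψ) := by
  have autocorrelation (φ : 𝓢(E, ℂ)) : RapidlyDecreasing fun x => ∫ t, ‖φ t‖ * ‖φ (x - t)‖ :=
    (rapidlyDecreasing_schwartzMap φ).integral_norm_mul_norm_sub φ.continuous.aestronglyMeasurable
      (rapidlyDecreasing_schwartzMap φ)
  have norm_le_norm_two_smul (x : E) : ‖x‖ ≤ ‖(2 : ℝ) • x‖ := by
    rw [norm_smul]
    norm_num
    linarith [norm_nonneg x]
  exact .of_le_fst_of_le_snd ((autocorrelation ψ).comp_of_norm_le norm_le_norm_two_smul)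
    (autocorrelation (𝓕 ψ))
    (fun z => (norm_wignerTransform_le_integral ψ z).trans (Real.le_norm_self _))
    (fun z => (norm_wignerTransform_le_integral_fourier ψ z).trans (Real.le_norm_self _))

lemma memLp_wignerTransform (ψ : 𝓢(E, ℂ)) (p : ℝ≥0∞) : MemLp (wignerTransform ψ) p :=
  (rapidlyDecreasing_wignerTransform ψ).memLp
    (stronglyMeasurable_wignerTransform ψ).aestronglyMeasurable p

lemma integrable_wignerTransform (ψ : 𝓢(E, ℂ)) : Integrable (wignerTransform ψ) :=
  memLp_one_iff_integrable.1 (memLp_wignerTransform ψ 1)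

lemma fourier_withLp_prod {E₁ E₂ F : Type*} [NormedAddCommGroup E₁] [InnerProductSpace ℝ E₁]
    [FiniteDimensional ℝ E₁] [MeasurableSpace E₁] [BorelSpace E₁] [NormedAddCommGroup E₂]
    [InnerProductSpace ℝ E₂] [FiniteDimensional ℝ E₂] [MeasurableSpace E₂] [BorelSpace E₂]
    [NormedAddCommGroup F] [NormedSpace ℂ F] {f : WithLp 2 (E₁ × E₂) → F} (hf : Integrable f)
    (a : E₁) (b : E₂) :
    𝓕 f (.toLp 2 (a, b)) = 𝓕 (fun x => 𝓕 (fun y => f (.toLp 2 (x, y))) b) a := by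
  have toLp_preserving := WithLp.volume_preserving_toLp E₁ E₂
  have toLp_embedding := (MeasurableEquiv.toLp 2 (E₁ × E₂)).measurableEmbedding
  have twisted_integrable : Integrable fun z : E₁ × E₂ =>
      𝐞 (-⟪WithLp.toLp 2 z, .toLp 2 (a, b)⟫) • f (.toLp 2 z) :=
    (toLp_preserving.integrable_comp_emb toLp_embedding).2 <|
      (Real.fourierIntegral_convergent_iff _).2 hf
  rw [Real.fourier_eq, ← toLp_preserving.integral_comp toLp_embedding, Measure.volume_eq_prod,
    integral_prod _ twisted_integrable]
  simp only [Real.fourier_eq, Circle.smul_def, WithLp.prod_inner_apply, neg_add,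
    AddChar.map_add_eq_mul, mul_smul, integral_smul]

lemma fourier_fourier_schwartzMap {F : Type*} [NormedAddCommGroup F] [NormedSpace ℂ F]
    [CompleteSpace F] (φ : 𝓢(E, F)) (x : E) : 𝓕 (𝓕 (φ : E → F)) x = φ (-x) := by
  rw [← neg_neg x, ← Real.fourierInv_eq_fourier_neg, ← SchwartzMap.fourier_coe,
    ← SchwartzMap.fourierInv_coe, FourierTransform.fourierInv_fourier_eq, neg_neg]

lemma fourier_wignerTransform {ψ : 𝓢(E, ℂ)} {c : ℂ} (hψ : ∀ x, ψ (-x) = c * ψ x)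
    (z : PhaseSpace E) :
    𝓕 (wignerTransform ψ) z = conj c * wignerTransform ψ (phaseRotation E z) := by
  obtain ⟨a, b⟩ := z
  have inversion (x : E) :
      𝓕 (fun q => wignerTransform ψ (.toLp 2 (x, q))) b = wignerProduct ψ x (-b) :=
    fourier_fourier_schwartzMap (wignerProduct ψ x) b
  calc 𝓕 (wignerTransform ψ) (.toLp 2 (a, b))
      = 𝓕 (fun x => wignerProduct ψ x (-b)) a := by
        simp only [fourier_withLp_prod (integrable_wignerTransform ψ), inversion]
    _ = 𝓕 (fun x => conj c * wignerProduct ψ (-b) x) a := by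
        simp only [wignerProduct_swap hψ _ (-b)]
    _ = conj c * wignerTransform ψ (phaseRotation E (.toLp 2 (a, b))) := by
        simp only [phaseRotation_toLp, wignerTransform, SchwartzMap.fourier_coe]
        exact congrFun (VectorFourier.fourierIntegral_const_smul Real.fourierChar volume (innerₗ E)
          (wignerProduct ψ (-b)) (conj c)) a

lemma norm_fourier_wignerTransform {ψ : 𝓢(E, ℂ)} (hψ : Function.Even ψ ∨ Function.Odd ψ)
    (z : PhaseSpace E) : ‖𝓕 (wignerTransform ψ) z‖ = ‖wignerTransform ψ (phaseRotation E z)‖ := by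
  rcases hψ with even | odd
  · rw [fourier_wignerTransform (c := 1) fun x => by rw [even, one_mul]]
    simp
  · rw [fourier_wignerTransform (c := -1) fun x => by rw [odd, neg_one_mul]]
    simp

theorem ofReal_one_sub_two_mul_le_volume_of_wignerTransform_concentrated {ψ : 𝓢(E, ℂ)}
    (hψ : Function.Even ψ ∨ Function.Odd ψ) (hW : wignerTransform ψ ≠ 0)
    {B : Set (PhaseSpace E)} (hB : MeasurableSet B) {ε : ℝ} (hε : 0 ≤ ε)
    (hconc : (1 - ε ^ 2) * ∫ z, ‖wignerTransform ψ z‖ ^ 2 ≤ ∫ z in B, ‖wignerTransform ψ z‖ ^ 2) :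
    ENNReal.ofReal (1 - 2 * ε) ≤ volume B := by
  have key := one_le_two_mul_add_volume_of_norm_fourier_eq (integrable_wignerTransform ψ)
    (memLp_wignerTransform ψ 2) (phaseRotation E) (norm_fourier_wignerTransform hψ) hW hB
    (eLpNorm_two_restrict_compl_le_of_concentrated (memLp_wignerTransform ψ 2) hB hε hconc)
  rw [ENNReal.ofReal_sub _ (by positivity), ENNReal.ofReal_one, ENNReal.ofReal_mul zero_le_two,
    ENNReal.ofReal_ofNat, tsub_le_iff_left]
  exact key

end WignerTransform

section PhaseSpaceDilation

variable {E : Type*} [NormedAddCommGroup E] [InnerProductSpace ℝ E] [FiniteDimensional ℝ E]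
  [MeasurableSpace E] [BorelSpace E]

lemma measurableEmbedding_smul_ofLp {s : ℝ} (hs : s ≠ 0) :
    MeasurableEmbedding fun z : PhaseSpace E => s • z.ofLp :=
  (measurableEmbedding_const_smul₀ hs).comp
    (MeasurableEquiv.toLp 2 (E × E)).symm.measurableEmbedding

lemma map_smul_ofLp_volume {s : ℝ} (hs : s ≠ 0) :
    Measure.map (fun z : PhaseSpace E => s • z.ofLp) volume =
      ENNReal.ofReal ((s ^ 2) ^ Module.finrank ℝ E)⁻¹ • volume := by
  have ofLp_preserving := WithLp.volume_preserving_ofLp E E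
  calc Measure.map (fun z : PhaseSpace E => s • z.ofLp) volume
      = Measure.map (fun z : E × E => s • z) (Measure.map WithLp.ofLp volume) :=
        (Measure.map_map (by fun_prop) ofLp_preserving.measurable).symm
    _ = ENNReal.ofReal ((s ^ 2) ^ Module.finrank ℝ E)⁻¹ • volume := by
        rw [ofLp_preserving.map_eq, Measure.volume_eq_prod, Measure.map_addHaar_smul _ hs,
          Module.finrank_prod, ← two_mul, pow_mul, abs_of_nonneg (by positivity)]

lemma volume_preimage_smul_ofLp {s : ℝ} (hs : s ≠ 0) (B : Set (E × E)) :
    volume ((fun z : PhaseSpace E => s • z.ofLp) ⁻¹' B) =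
      ENNReal.ofReal ((s ^ 2) ^ Module.finrank ℝ E)⁻¹ * volume B := by
  rw [← (measurableEmbedding_smul_ofLp hs).map_apply, map_smul_ofLp_volume hs,
    Measure.smul_apply, smul_eq_mul]

lemma setIntegral_preimage_smul_ofLp {F : Type*} [NormedAddCommGroup F] [NormedSpace ℝ F] {s : ℝ}
    (hs : s ≠ 0) (g : E × E → F) (B : Set (E × E)) :
    ∫ z in (fun z : PhaseSpace E => s • z.ofLp) ⁻¹' B, g (s • z.ofLp) =
      ((s ^ 2) ^ Module.finrank ℝ E)⁻¹ • ∫ z in B, g z := by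
  rw [← (measurableEmbedding_smul_ofLp hs).setIntegral_map, map_smul_ofLp_volume hs,
    Measure.restrict_smul, integral_smul_measure, ENNReal.toReal_ofReal (by positivity)]

end PhaseSpaceDilation

section Wigner

variable {n : ℕ} {hb : ℝ}

lemma wignerFn_smul_ofLp {s : ℝ} (hs : 0 < s) (hsb : s ^ 2 = Real.pi * hb)
    {φ ψ : 𝓢(EuclideanSpace ℝ (Fin n), ℂ)} (hφ : ∀ x, φ x = ψ (s • x))
    (z : PhaseSpace (EuclideanSpace ℝ (Fin n))) :
    wignerFn n hb ψ (s • z.ofLp) = ((s ^ n)⁻¹ : ℝ) * wignerTransform φ z := by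
  have hhb : 0 < hb := pos_of_mul_pos_right (hsb ▸ sq_pos_of_pos hs) Real.pi_pos.le
  let F : EuclideanSpace ℝ (Fin n) → ℂ := fun y =>
    Complex.exp (-(Complex.I / hb) * (⟪s • z.snd, y⟫ : ℝ)) *
      ψ (s • z.fst + (1 / 2 : ℝ) • y) * conj (ψ (s • z.fst - (1 / 2 : ℝ) • y))
  have substitution : wignerTransform φ z = ∫ v, F ((2 * s) • v) := by
    rw [wignerTransform, SchwartzMap.fourier_coe, Real.fourier_eq']
    refine integral_congr_ae (.of_forall fun v => ?_)
    have half_smul : (1 / 2 : ℝ) • (2 * s) • v = s • v := by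
      rw [smul_smul]
      ring_nf
    have phase : -(Complex.I / hb) * (⟪s • z.snd, (2 * s) • v⟫ : ℝ) =
        ((-2 * Real.pi * ⟪v, z.snd⟫ : ℝ) : ℂ) * Complex.I := by
      have hsb' : (s : ℂ) ^ 2 = Real.pi * hb := by exact_mod_cast hsb
      have hb_ne_zero : (hb : ℂ) ≠ 0 := by exact_mod_cast hhb.ne'
      rw [inner_smul_left, inner_smul_right, real_inner_comm v z.snd]
      push_cast
      field_simp
      simp only [conj_trivial]
      linear_combination (-⟪v, z.snd⟫) * hsb'
    simp only [F, half_smul, phase, wignerProduct_apply, hφ, smul_add, smul_sub, smul_eq_mul,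
      mul_assoc]
  have prefactor : (2 * Real.pi * hb) ^ (-(n : ℝ)) = (s ^ n)⁻¹ * ((2 * s) ^ n)⁻¹ := by
    rw [Real.rpow_neg (by positivity), Real.rpow_natCast, mul_assoc, ← hsb, ← mul_inv, ← mul_pow]
    ring_nf
  have wignerFn_eq : wignerFn n hb ψ (s • z.ofLp) =
      ((2 * Real.pi * hb) ^ (-(n : ℝ)) : ℝ) * ∫ y, F y := rfl
  rw [wignerFn_eq, prefactor, substitution, Measure.integral_comp_smul, finrank_euclideanSpace_fin,
    abs_of_pos (by positivity), Complex.real_smul, Complex.ofReal_mul, mul_assoc]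

lemma setIntegral_norm_sq_wignerTransform {s : ℝ} (hs : 0 < s) (hsb : s ^ 2 = Real.pi * hb)
    {φ ψ : 𝓢(EuclideanSpace ℝ (Fin n), ℂ)} (hφ : ∀ x, φ x = ψ (s • x))
    (B : Set (EuclideanSpace ℝ (Fin n) × EuclideanSpace ℝ (Fin n))) :
    ∫ z in (fun z : PhaseSpace (EuclideanSpace ℝ (Fin n)) => s • z.ofLp) ⁻¹' B,
      ‖wignerTransform φ z‖ ^ 2 = ∫ z in B, ‖wignerFn n hb ψ z‖ ^ 2 := by
  have norm_sq (z : PhaseSpace (EuclideanSpace ℝ (Fin n))) :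
      ‖wignerFn n hb ψ (s • z.ofLp)‖ ^ 2 = ((s ^ 2) ^ n)⁻¹ * ‖wignerTransform φ z‖ ^ 2 := by
    rw [wignerFn_smul_ofLp hs hsb hφ, norm_mul, Complex.norm_real,
      Real.norm_of_nonneg (by positivity), mul_pow, inv_pow, pow_right_comm]
  have h := setIntegral_preimage_smul_ofLp hs.ne' (fun z => ‖wignerFn n hb ψ z‖ ^ 2) B
  simp only [norm_sq, integral_const_mul, finrank_euclideanSpace_fin, smul_eq_mul] at h
  exact mul_left_cancel₀ (by positivity) h

theorem ofReal_one_sub_two_mul_mul_le_volume_of_wignerFn_concentrated (hhb : 0 < hb)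
    {ψ : 𝓢(EuclideanSpace ℝ (Fin n), ℂ)} (hψ : Function.Even ψ ∨ Function.Odd ψ)
    (hW : wignerFn n hb ψ ≠ 0)
    {B : Set (EuclideanSpace ℝ (Fin n) × EuclideanSpace ℝ (Fin n))} (hB : MeasurableSet B)
    {ε : ℝ} (hε : 0 ≤ ε)
    (hconc : (1 - ε ^ 2) * ∫ z, ‖wignerFn n hb ψ z‖ ^ 2 ≤ ∫ z in B, ‖wignerFn n hb ψ z‖ ^ 2) :
    ENNReal.ofReal ((1 - 2 * ε) * (Real.pi * hb) ^ n) ≤ volume B := by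
  obtain ⟨s, hs, hsb⟩ : ∃ s : ℝ, 0 < s ∧ s ^ 2 = Real.pi * hb :=
    ⟨√(Real.pi * hb), by positivity, Real.sq_sqrt (by positivity)⟩
  let φ : 𝓢(EuclideanSpace ℝ (Fin n), ℂ) :=
    ψ.compCLMOfContinuousLinearEquiv ℝ (.smulLeft (Units.mk0 s hs.ne'))
  have hφ (x) : φ x = ψ (s • x) := rfl
  have hφ_parity : Function.Even φ ∨ Function.Odd φ :=
    hψ.imp (fun even x => by rw [hφ, hφ, smul_neg, even]) fun odd x => by rw [hφ, hφ, smul_neg, odd]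
  have hφW : wignerTransform φ ≠ 0 := by
    contrapose! hW
    ext z
    have h := wignerFn_smul_ofLp hs hsb hφ (.toLp 2 (s⁻¹ • z))
    simpa [hW, smul_smul, hs.ne'] using h
  have hφ_conc := hconc
  rw [← setIntegral_univ, ← setIntegral_norm_sq_wignerTransform hs hsb hφ,
    ← setIntegral_norm_sq_wignerTransform hs hsb hφ, Set.preimage_univ, setIntegral_univ] at hφ_conc
  have volume_ge := ofReal_one_sub_two_mul_le_volume_of_wignerTransform_concentrated hφ_parity hφW
    ((measurableEmbedding_smul_ofLp hs.ne').measurable hB) hε hφ_conc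
  rw [volume_preimage_smul_ofLp hs.ne', hsb, finrank_euclideanSpace_fin,
    ENNReal.ofReal_inv_of_pos (by positivity), mul_comm _ (volume B), ← div_eq_mul_inv,
    ENNReal.le_div_iff_mul_le (by simp [hhb, Real.pi_pos]) (by simp)] at volume_ge
  rwa [ENNReal.ofReal_mul' (by positivity)]

lemma measurableSet_phaseBall (n : ℕ) (hb : ℝ) : MeasurableSet (phaseBall n hb) :=
  measurableSet_le (by fun_prop) (by fun_prop)

lemma volume_phaseBall (n : ℕ) {hb : ℝ} (hhb : 0 ≤ hb) :
    volume (phaseBall n hb) = ENNReal.ofReal ((Real.pi * hb) ^ n / n.factorial) := by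
  have preimage_eq : WithLp.ofLp ⁻¹' phaseBall n hb =
      Metric.closedBall (0 : PhaseSpace (EuclideanSpace ℝ (Fin n))) √hb := by
    ext z
    rw [mem_closedBall_zero_iff, WithLp.prod_norm_eq_of_L2, Real.sqrt_le_sqrt_iff hhb]
    rfl
  have finrank_eq : Module.finrank ℝ (PhaseSpace (EuclideanSpace ℝ (Fin n))) = 2 * n := by
    rw [(WithLp.linearEquiv 2 ℝ _).finrank_eq, Module.finrank_prod, finrank_euclideanSpace_fin,
      two_mul]
  rcases n.eq_zero_or_pos with rfl | hn
  · simp [Measure.volume_eq_prod, volume_euclideanSpace_eq_dirac, Measure.dirac_prod_dirac,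
      phaseBall, hhb]
  have : Nonempty (Fin n) := ⟨⟨0, hn⟩⟩
  rw [← (WithLp.volume_preserving_ofLp _ _).measure_preimage
      (measurableSet_phaseBall n hb).nullMeasurableSet, preimage_eq,
    InnerProductSpace.volume_closedBall_of_dim_even finrank_eq, finrank_eq, pow_mul,
    ← ENNReal.ofReal_pow (by positivity), Real.sq_sqrt hhb, ← ENNReal.ofReal_pow hhb,
    ← ENNReal.ofReal_mul (by positivity), mul_pow, mul_div_assoc', mul_comm (hb ^ n)]

theorem wigner_concentration_ball_general (hhb : 0 < hb) {ψ : 𝓢(EuclideanSpace ℝ (Fin n), ℂ)}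
    (hψ : Function.Even ψ ∨ Function.Odd ψ) (hW : wignerFn n hb ψ ≠ 0) {ε : ℝ} (hε : 0 ≤ ε)
    (hconc : (1 - ε ^ 2) * ∫ z, ‖wignerFn n hb ψ z‖ ^ 2 ≤
      ∫ z in phaseBall n hb, ‖wignerFn n hb ψ z‖ ^ 2) :
    1 / 2 - 1 / (2 * (n.factorial : ℝ)) ≤ ε := by
  have volume_ge := ofReal_one_sub_two_mul_mul_le_volume_of_wignerFn_concentrated hhb hψ hW
    (measurableSet_phaseBall n hb) hε hconc
  rw [volume_phaseBall n hhb.le, ENNReal.ofReal_le_ofReal_iff (by positivity)] at volume_ge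
  have one_sub_le : 1 - 2 * ε ≤ 1 / (n.factorial : ℝ) := by
    rw [div_eq_mul_one_div, mul_comm] at volume_ge
    exact le_of_mul_le_mul_left volume_ge (by positivity)
  rw [mul_comm 2, ← div_div]
  linarith

end Wigner

/-- If the Wigner function of an even Schwartz function is `ε`-concentrated in the ball
`B²ⁿ(√ħ)`, then `ε ≥ 1/2 − 1/(2·n!)`. -/
theorem wigner_concentration_ball (n : ℕ) (hb : ℝ) (hhb : 0 < hb)
    (ψ : SchwartzMap (EuclideanSpace ℝ (Fin n)) ℂ) (hψeven : ∀ x, ψ (-x) = ψ x)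
    (hW0 : wignerFn n hb ψ ≠ 0)
    (ε : ℝ) (hε0 : 0 ≤ ε) (hε1 : ε ≤ 1)
    (hconc : (1 - ε ^ 2) *
        ∫ z : EuclideanSpace ℝ (Fin n) × EuclideanSpace ℝ (Fin n), ‖wignerFn n hb ψ z‖ ^ 2 ≤
        ∫ z in phaseBall n hb, ‖wignerFn n hb ψ z‖ ^ 2) :
    1 / 2 - 1 / (2 * (n.factorial : ℝ)) ≤ ε :=
  wigner_concentration_ball_general hhb (.inl hψeven) hW0 hε0 hconc
end
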